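/- arXiv:2406.10195 — 5 statements merged into one kernel-verified Lean document; each statement's English description precedes it below -/
import Mathlib

section
/- Let ℰ : M_2(ℂ) → M_2(ℂ) be a quantum channel with Kraus rank at most 2, i.e., ℰ(X) = K_1 X K_1† + K_2 X K_2† for some K_1, K_2 ∈ M_2(ℂ) with K_1†K_1 + K_2†K_2 = 𝟙_2. Suppose (i) the determinant of ℰ, viewed as a linear endomorphism of the 4-dimensional complex vector space M_2(ℂ), is zero, and (ii) there exists a positive semidefinite ρ ∈ M_2(ℂ) with Tr ρ = 1 such that ℰ(ρ) = 𝟙_2/2. Then ℰ is the completely dephasing channel up to local unitaries: there exist unitaries V, W ∈ U(2) such that W ℰ(V X V†) W† = (1/2) X + (1/2) σ_z X σ_z for every X ∈ M_2(ℂ), where σ_z = diag(1, −1). -/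
open Matrix
open scoped ComplexOrder

noncomputable section

/-- The quantum channel `X ↦ K₁ X K₁† + K₂ X K₂†` as a `ℂ`-linear endomorphism of
`M_2(ℂ)`. -/
def qchanL (K1 K2 : Matrix (Fin 2) (Fin 2) ℂ) :
    Matrix (Fin 2) (Fin 2) ℂ →ₗ[ℂ] Matrix (Fin 2) (Fin 2) ℂ :=
  (LinearMap.mulLeft ℂ K1).comp (LinearMap.mulRight ℂ K1ᴴ) +
    (LinearMap.mulLeft ℂ K2).comp (LinearMap.mulRight ℂ K2ᴴ)

/-- The Pauli matrix `σ_z`. -/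
def sigmaZ : Matrix (Fin 2) (Fin 2) ℂ := !![1, 0; 0, -1]


/-!
Any two-element Kraus family `K₀, K₁` can be mixed by a unitary so that the new `L₀` is singular,
because the pencil `α K₀ + β K₁` contains a singular matrix. For a qubit `L₀` then has rank one,
so on a kernel vector `X` of the channel `L₁ X L₁†` is a multiple of some `a a†`. If `L₁` were
invertible, `X` would be a multiple of some `e e†`, which the vanishing of its trace forbids; so
`L₁` has rank one too, and the channel is `X ↦ ∑ₖ ⟨bₖ|X|bₖ⟩ aₖ aₖ†`. As it reaches `1`, the `aₖ`
are orthogonal, and then trace preservation makes the `bₖ` orthogonal: the channel measures in one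
orthonormal basis and prepares the states of another.
-/

section Rank

variable {m n F : Type*} [Fintype n] [Field F]

theorem rank_lt_card_of_det_eq_zero [DecidableEq n] {M : Matrix n n F} (hM : M.det = 0) :
    M.rank < Fintype.card n := by
  refine M.rank_le_card_width.lt_of_ne fun hrank => ?_
  have hcols : LinearIndependent F M.col := by
    rw [linearIndependent_iff_card_eq_finrank_span, Set.finrank, ← M.rank_eq_finrank_span_cols,
      hrank]
  exact (M.isUnit_iff_isUnit_det.mp (linearIndependent_cols_iff_isUnit.mp hcols)).ne_zero hM

theorem exists_eq_vecMulVec_of_rank_le_one {M : Matrix m n F} (hM : M.rank ≤ 1) :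
    ∃ (a : m → F) (b : n → F), M = vecMulVec a b := by
  classical
  obtain ⟨a, ha⟩ := finrank_le_one_iff.mp hM
  choose b hb using fun j => ha ⟨M *ᵥ Pi.single j 1, LinearMap.mem_range_self M.mulVecLin _⟩
  refine ⟨a, b, Matrix.ext fun i j => ?_⟩
  have hij := congrFun (congrArg Subtype.val (hb j)) i
  simpa [vecMulVec_apply, mul_comm] using hij.symm

theorem exists_eq_vecMulVec_of_det_eq_zero {M : Matrix (Fin 2) (Fin 2) F} (hM : M.det = 0) :
    ∃ a b : Fin 2 → F, M = vecMulVec a b :=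
  exists_eq_vecMulVec_of_rank_le_one (Nat.lt_succ_iff.mp (rank_lt_card_of_det_eq_zero hM))

end Rank

theorem exists_ne_zero_det_smul_add_smul_eq_zero {n F : Type*} [Fintype n] [DecidableEq n]
    [Nonempty n] [Field F] [IsAlgClosed F] (M N : Matrix n n F) :
    ∃ v : Fin 2 → F, v ≠ 0 ∧ (v 0 • M + v 1 • N).det = 0 := by
  by_cases hN : N.det = 0
  · exact ⟨![0, 1], by simp, by simpa using hN⟩
  obtain ⟨z, hz⟩ := spectrum.nonempty_of_isAlgClosed_of_finiteDimensional F (M * N⁻¹)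
  have hfactor : (-1 : F) • M + z • N = (algebraMap F _ z - M * N⁻¹) * N := by
    rw [sub_mul, nonsing_inv_mul_cancel_right _ _ (isUnit_iff_ne_zero.mpr hN),
      Algebra.algebraMap_eq_smul_one, smul_mul_assoc, one_mul, neg_one_smul, neg_add_eq_sub]
  refine ⟨![-1, z], by simp, ?_⟩
  rw [spectrum.mem_iff, isUnit_iff_isUnit_det, isUnit_iff_ne_zero, not_not] at hz
  simp only [cons_val_zero, cons_val_one, hfactor, det_mul, hz, zero_mul]

theorem exists_mem_unitaryGroup_row_eq_smul {ι 𝕜 : Type*} [Fintype ι] [DecidableEq ι] [RCLike 𝕜]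
    (i : ι) {v : ι → 𝕜} (hv : v ≠ 0) : ∃ U ∈ unitaryGroup ι 𝕜, ∃ c : 𝕜, U i = c • v := by
  set w : EuclideanSpace 𝕜 ι := WithLp.toLp 2 v
  have hw : ‖w‖ ≠ 0 := by simpa [w] using hv
  have horth : Orthonormal 𝕜 (({i} : Set ι).domRestrict fun _ => ((‖w‖ : 𝕜)⁻¹) • w) := by
    refine ⟨fun _ => ?_, fun j k hjk => (hjk (Subsingleton.elim j k)).elim⟩
    rw [Set.domRestrict_apply, norm_smul, norm_inv, RCLike.norm_ofReal, abs_norm,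
      inv_mul_cancel₀ hw]
  obtain ⟨b, hb⟩ := horth.exists_orthonormalBasis_extension_of_card_eq (by simp)
  have hU := (EuclideanSpace.basisFun ι 𝕜).toMatrix_orthonormalBasis_mem_unitary b
  refine ⟨_, transpose_mem_unitaryGroup_iff.mpr hU, (‖w‖ : 𝕜)⁻¹, funext fun j => ?_⟩
  simp [Module.Basis.toMatrix_apply, hb i rfl, w]

section Diagonal

variable {n R 𝕜 : Type*} [Fintype n] [DecidableEq n]

theorem diagonal_mul_diagonal_diag_mul_diagonal [Semiring R] (u v : n → R) (M : Matrix n n R) :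
    diagonal u * diagonal M.diag * diagonal v = diagonal (diagonal u * M * diagonal v).diag := by
  rw [diagonal_mul_diagonal, diagonal_mul_diagonal]
  congr 1
  ext i
  simp

theorem isDiag_of_diagonal_mul_eq_one [Semiring R] [NoZeroDivisors R] [Nontrivial R]
    {t : n → R} {M : Matrix n n R} (h : diagonal t * M = 1) : M.IsDiag := by
  intro i j hij
  have hentry : ∀ k, t i * M i k = (1 : Matrix n n R) i k := fun k => by rw [← h, diagonal_mul]
  have hti : t i ≠ 0 := fun h0 => by simpa [h0] using hentry i
  simpa [hij, hti] using hentry j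

theorem exists_mem_unitaryGroup_eq_mul_diagonal [RCLike 𝕜] {A : Matrix n n 𝕜} (hA : IsUnit A)
    (hdiag : (Aᴴ * A).IsDiag) :
    ∃ F ∈ unitaryGroup n 𝕜, ∃ s : n → ℝ, A = F * diagonal (fun k => (s k : 𝕜)) := by
  have hpos : ∀ k, 0 < (Aᴴ * A) k k :=
    fun k => (PosDef.conjTranspose_mul_self A (mulVec_injective_of_isUnit hA)).diag_pos
  set s : n → ℝ := fun k => √(RCLike.re ((Aᴴ * A) k k))
  have hs₀ : ∀ k, (s k : 𝕜) ≠ 0 := fun k =>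
    RCLike.ofReal_ne_zero.mpr (Real.sqrt_pos.mpr (RCLike.pos_iff.mp (hpos k)).1).ne'
  have hsq : Aᴴ * A = diagonal (fun k => (s k : 𝕜) * s k) := by
    rw [← hdiag.diagonal_diag]
    congr 1
    ext k
    obtain ⟨hre, him⟩ := RCLike.pos_iff.mp (hpos k)
    rw [← RCLike.ofReal_mul, Real.mul_self_sqrt hre.le]
    exact RCLike.ext (RCLike.ofReal_re _).symm (him.trans (RCLike.ofReal_im _).symm)
  refine ⟨A * diagonal (fun k => (s k : 𝕜)⁻¹), mem_unitaryGroup_iff'.mpr ?_, s, ?_⟩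
  · calc star (A * diagonal fun k => (s k : 𝕜)⁻¹) * (A * diagonal fun k => (s k : 𝕜)⁻¹)
        = diagonal (fun k => (s k : 𝕜)⁻¹) * (Aᴴ * A) * diagonal (fun k => (s k : 𝕜)⁻¹) := by
          simp [star_eq_conjTranspose, mul_assoc, Pi.star_def]
      _ = 1 := by
          simp [hsq, hs₀]
  · simp [mul_assoc, hs₀]

end Diagonal

theorem vecMulVec_mul_mul_conjTranspose {n R : Type*} [Fintype n] [CommRing R] [StarRing R]
    (a b : n → R) (X : Matrix n n R) :
    vecMulVec a b * X * (vecMulVec a b)ᴴ = (b ᵥ* X ⬝ᵥ star b) • vecMulVec a (star a) := by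
  rw [conjTranspose_vecMulVec, vecMulVec_mul, vecMulVec_mul_vecMulVec, vecMulVec_smul]

section Kraus

variable {ι n R : Type*} [Fintype ι] [Fintype n] [DecidableEq n] [CommRing R] [StarRing R]

/-- The completely positive map `X ↦ ∑ᵢ Kᵢ X Kᵢ†` with Kraus operators `Kᵢ`. -/
def krausMap (K : ι → Matrix n n R) : Matrix n n R →ₗ[R] Matrix n n R :=
  ∑ i, LinearMap.mulLeftRight R (K i, (K i)ᴴ)

theorem krausMap_apply (K : ι → Matrix n n R) (X : Matrix n n R) :
    krausMap K X = ∑ i, K i * X * (K i)ᴴ := by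
  simp [krausMap]

theorem trace_krausMap {K : ι → Matrix n n R} (hK : ∑ i, (K i)ᴴ * K i = 1) (X : Matrix n n R) :
    (krausMap K X).trace = X.trace := by
  calc (krausMap K X).trace = ∑ i, ((K i)ᴴ * K i * X).trace := by
        rw [krausMap_apply, trace_sum]
        exact Finset.sum_congr rfl fun i _ => trace_mul_cycle _ _ _
    _ = X.trace := by rw [← trace_sum, ← Finset.sum_mul, hK, one_mul]

theorem krausMap_unitary_mixing [DecidableEq ι] {U : Matrix ι ι R} (hU : U ∈ unitaryGroup ι R)
    (K : ι → Matrix n n R) : krausMap (fun i => ∑ j, U i j • K j) = krausMap K := by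
  have hcoeff : ∀ j k, ∑ i, U i j * star (U i k) = (1 : Matrix ι ι R) k j := fun j k => by
    rw [← mem_unitaryGroup_iff'.mp hU]
    simp [mul_apply, mul_comm]
  ext1 X
  calc krausMap (fun i => ∑ j, U i j • K j) X
      = ∑ i, ∑ j, ∑ k, (U i j * star (U i k)) • (K j * X * (K k)ᴴ) := by
        simp only [krausMap_apply, conjTranspose_sum, conjTranspose_smul, Finset.sum_mul,
          Finset.mul_sum, smul_mul_assoc, mul_smul_comm, Finset.smul_sum, smul_smul,
          mul_comm (star _)]
        exact Finset.sum_congr rfl fun i _ => Finset.sum_comm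
    _ = ∑ j, ∑ k, (∑ i, U i j * star (U i k)) • (K j * X * (K k)ᴴ) := by
        rw [Finset.sum_comm]
        simp only [Finset.sum_smul]
        exact Finset.sum_congr rfl fun j _ => Finset.sum_comm
    _ = krausMap K X := by
        simp [hcoeff, krausMap_apply, one_apply]

end Kraus

theorem exists_krausMap_eq_and_det_eq_zero {n : Type*} [Fintype n] [DecidableEq n] [Nonempty n]
    (K : Fin 2 → Matrix n n ℂ) :
    ∃ L : Fin 2 → Matrix n n ℂ, krausMap L = krausMap K ∧ (L 0).det = 0 := by
  obtain ⟨v, hv, hdet⟩ := exists_ne_zero_det_smul_add_smul_eq_zero (K 0) (K 1)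
  obtain ⟨U, hU, c, hc⟩ := exists_mem_unitaryGroup_row_eq_smul 0 hv
  refine ⟨_, krausMap_unitary_mixing hU K, ?_⟩
  have hrow : ∑ j, U 0 j • K j = c • (v 0 • K 0 + v 1 • K 1) := by
    simp only [hc, Fin.sum_univ_two, Pi.smul_apply, smul_eq_mul, mul_smul, smul_add]
  simp only [hrow, det_smul, hdet, mul_zero]

section RankOne

variable {n 𝕜 : Type*} [Fintype n] [DecidableEq n] [RCLike 𝕜]

theorem eq_zero_of_conj_eq_smul_vecMulVec {L X : Matrix n n 𝕜} {a : n → 𝕜} {c : 𝕜}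
    (hL : L.det ≠ 0) (hX : X.trace = 0) (h : L * X * Lᴴ = c • vecMulVec a (star a)) : X = 0 := by
  have hLinv : L⁻¹ * L = 1 := nonsing_inv_mul L (isUnit_iff_ne_zero.mpr hL)
  have hLinv' : Lᴴ * (L⁻¹)ᴴ = 1 := by rw [← conjTranspose_mul, hLinv, conjTranspose_one]
  have hXe : X = c • vecMulVec (L⁻¹ *ᵥ a) (star (L⁻¹ *ᵥ a)) := by
    calc X = (L⁻¹ * L) * X * (Lᴴ * (L⁻¹)ᴴ) := by rw [hLinv, hLinv', one_mul, mul_one]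
      _ = L⁻¹ * (L * X * Lᴴ) * (L⁻¹)ᴴ := by simp only [mul_assoc]
      _ = _ := by
        rw [h, mul_smul_comm, smul_mul_assoc, mul_vecMulVec, vecMulVec_mul, star_mulVec]
  rw [hXe, trace_smul, trace_vecMulVec, smul_eq_mul, mul_eq_zero, dotProduct_self_star_eq_zero]
    at hX
  rcases hX with hc | he
  · rw [hXe, hc, zero_smul]
  · rw [hXe, he, zero_vecMulVec, smul_zero]

theorem det_eq_zero_of_vecMulVec_conj_add_conj_eq_zero {L X : Matrix n n 𝕜} {a b : n → 𝕜}
    (hX : X ≠ 0) (htr : X.trace = 0)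
    (h : vecMulVec a b * X * (vecMulVec a b)ᴴ + L * X * Lᴴ = 0) : L.det = 0 := by
  by_contra hL
  refine hX (eq_zero_of_conj_eq_smul_vecMulVec (a := a) (c := -(b ᵥ* X ⬝ᵥ star b)) hL htr ?_)
  rw [eq_neg_of_add_eq_zero_right h, vecMulVec_mul_mul_conjTranspose, neg_smul]

end RankOne

theorem exists_krausMap_vecMulVec_eq {K : Fin 2 → Matrix (Fin 2) (Fin 2) ℂ}
    (htr : ∀ X, (krausMap K X).trace = X.trace) (hker : LinearMap.ker (krausMap K) ≠ ⊥) :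
    ∃ a b : Fin 2 → Fin 2 → ℂ, krausMap K = krausMap fun k => vecMulVec (a k) (b k) := by
  obtain ⟨L, hLK, hL₀⟩ := exists_krausMap_eq_and_det_eq_zero K
  obtain ⟨X, hX, hX₀⟩ := Submodule.exists_mem_ne_zero_of_ne_bot hker
  rw [LinearMap.mem_ker] at hX
  have hXtr : X.trace = 0 := by rw [← htr, hX, trace_zero]
  obtain ⟨a, b, hab⟩ := exists_eq_vecMulVec_of_det_eq_zero hL₀
  have hL₁ : (L 1).det = 0 := by
    refine det_eq_zero_of_vecMulVec_conj_add_conj_eq_zero (a := a) (b := b) hX₀ hXtr ?_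
    rwa [← hLK, krausMap_apply, Fin.sum_univ_two, hab] at hX
  have hL : ∀ k, (L k).det = 0 := Fin.forall_fin_two.mpr ⟨hL₀, hL₁⟩
  choose a b hab using fun k => exists_eq_vecMulVec_of_det_eq_zero (hL k)
  exact ⟨a, b, by rw [← hLK]; exact congrArg krausMap (funext hab)⟩

section MeasurePrepare

variable {n κ R 𝕜 : Type*} [Fintype n] [Fintype κ] [DecidableEq κ] [CommRing R] [StarRing R]

/-- The measure-and-prepare map `X ↦ ∑ₖ ⟨bₖ|X|bₖ⟩ aₖ aₖ†`, where `aₖ` and `bₖ` are the `k`-th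
columns of `A` and `B`; these vectors need not be normalised. -/
def measurePrepare (A B : Matrix n κ R) (X : Matrix n n R) : Matrix n n R :=
  A * diagonal (Bᴴ * X * B).diag * Aᴴ

theorem krausMap_vecMulVec_apply [DecidableEq n] (a b : κ → n → R) (X : Matrix n n R) :
    krausMap (fun k => vecMulVec (a k) (b k)) X = measurePrepare (of a)ᵀ (of b)ᴴ X := by
  have hdiag : ∀ k, ((of b)ᴴᴴ * X * (of b)ᴴ) k k = b k ᵥ* X ⬝ᵥ star (b k) := fun k => by
    rw [conjTranspose_conjTranspose]
    rfl
  ext i j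
  simp only [krausMap_apply, vecMulVec_mul_mul_conjTranspose, Matrix.sum_apply, measurePrepare,
    mul_apply (M := _ * diagonal _), mul_diagonal, diag_apply, hdiag]
  refine Finset.sum_congr rfl fun k _ => ?_
  simp only [Matrix.smul_apply, vecMulVec_apply, Pi.star_apply, conjTranspose_apply,
    transpose_apply, of_apply, smul_eq_mul]
  ring

theorem mul_diagonal_mul_conjTranspose_eq_one_of_trace [DecidableEq n] {A B : Matrix n κ R}
    (htr : ∀ X, (measurePrepare A B X).trace = X.trace) :
    B * diagonal (Aᴴ * A).diag * Bᴴ = 1 := by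
  have hdiag : ∀ M N : Matrix κ κ R,
      (M * diagonal N.diag).trace = (diagonal M.diag * N).trace := fun M N => by simp [trace]
  have htrace : ∀ X, (B * diagonal (Aᴴ * A).diag * Bᴴ * X).trace = (1 * X).trace := fun X =>
    calc (B * diagonal (Aᴴ * A).diag * Bᴴ * X).trace
        = (diagonal (Aᴴ * A).diag * (Bᴴ * X * B)).trace := by
          rw [Matrix.mul_assoc, Matrix.mul_assoc, trace_mul_comm]
          simp only [Matrix.mul_assoc]
      _ = (measurePrepare A B X).trace := by
          rw [← hdiag, measurePrepare, trace_mul_cycle A]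
      _ = (1 * X).trace := by rw [htr, one_mul]
  exact ext_iff_trace_mul_right.mpr htrace

theorem exists_unitary_conj_measurePrepare_eq_diagonal [DecidableEq n] [RCLike 𝕜]
    {A B : Matrix n n 𝕜} (htr : ∀ X, (measurePrepare A B X).trace = X.trace)
    (hone : ∃ X, measurePrepare A B X = 1) :
    ∃ V ∈ unitaryGroup n 𝕜, ∃ W ∈ unitaryGroup n 𝕜, ∀ X,
      W * measurePrepare A B (V * X * Vᴴ) * Wᴴ = diagonal X.diag := by
  obtain ⟨X₀, hX₀⟩ := hone
  rw [measurePrepare, mul_assoc] at hX₀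
  have hdiag : (Aᴴ * A).IsDiag := isDiag_of_diagonal_mul_eq_one
    (by rw [← mul_assoc]; exact mul_eq_one_comm.mp hX₀)
  obtain ⟨F, hF, s, hA⟩ :=
    exists_mem_unitaryGroup_eq_mul_diagonal (IsUnit.of_mul_eq_one _ hX₀) hdiag
  set S : Matrix n n 𝕜 := diagonal fun k => (s k : 𝕜) with hS
  have hSS : Sᴴ = S := by simp [hS, Pi.star_def]
  have hFF : Fᴴ * F = 1 := mem_unitaryGroup_iff'.mp hF
  have hAA : Aᴴ * A = S * S := by
    rw [hA, conjTranspose_mul, hSS, mul_assoc, ← mul_assoc Fᴴ, hFF, one_mul]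
  have hBS : B * S * (B * S)ᴴ = 1 := by
    rw [← mul_diagonal_mul_conjTranspose_eq_one_of_trace htr, hdiag.diagonal_diag, hAA,
      conjTranspose_mul, hSS]
    simp only [mul_assoc]
  have hBS' : (B * S)ᴴ * (B * S) = 1 := mul_eq_one_comm.mp hBS
  refine ⟨B * S, mem_unitaryGroup_iff.mpr hBS, Fᴴ, Unitary.star_mem hF, fun X => ?_⟩
  calc Fᴴ * measurePrepare A B (B * S * X * (B * S)ᴴ) * Fᴴᴴ
      = (Fᴴ * F) * (S * diagonal (Bᴴ * (B * S * X * (B * S)ᴴ) * B).diag * S) * (Fᴴ * F) := by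
        rw [measurePrepare, hA, conjTranspose_mul F, hSS, conjTranspose_conjTranspose]
        simp only [mul_assoc]
    _ = diagonal (S * (Bᴴ * (B * S * X * (B * S)ᴴ) * B) * S).diag := by
        rw [hFF, one_mul, mul_one, hS, diagonal_mul_diagonal_diag_mul_diagonal]
    _ = diagonal ((B * S)ᴴ * (B * S) * X * ((B * S)ᴴ * (B * S))).diag := by
        simp only [mul_assoc, conjTranspose_mul, hSS]
    _ = diagonal X.diag := by rw [hBS', one_mul, mul_one]

end MeasurePrepare

theorem qchanL_eq_krausMap (K₁ K₂ : Matrix (Fin 2) (Fin 2) ℂ) :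
    qchanL K₁ K₂ = krausMap ![K₁, K₂] := by
  ext1 X
  simp [qchanL, krausMap_apply, Fin.sum_univ_two, mul_assoc]

theorem half_smul_add_half_smul_sigmaZ_conj (X : Matrix (Fin 2) (Fin 2) ℂ) :
    ((2 : ℂ))⁻¹ • X + ((2 : ℂ))⁻¹ • (sigmaZ * X * sigmaZ) = diagonal X.diag := by
  have hσ : sigmaZ = diagonal ![1, -1] := by
    ext i j
    fin_cases i <;> fin_cases j <;> rfl
  ext i j
  fin_cases i <;> fin_cases j <;> simp [hσ] <;> ring

theorem stmt_12_general (K1 K2 : Matrix (Fin 2) (Fin 2) ℂ)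
    (hTP : K1ᴴ * K1 + K2ᴴ * K2 = 1)
    (hdet : LinearMap.det (qchanL K1 K2) = 0)
    (hone : 1 ∈ LinearMap.range (qchanL K1 K2)) :
    ∃ V W : Matrix (Fin 2) (Fin 2) ℂ,
      V ∈ Matrix.unitaryGroup (Fin 2) ℂ ∧ W ∈ Matrix.unitaryGroup (Fin 2) ℂ ∧
      ∀ X : Matrix (Fin 2) (Fin 2) ℂ,
        W * (qchanL K1 K2 (V * X * Vᴴ)) * Wᴴ =
          ((2 : ℂ))⁻¹ • X + ((2 : ℂ))⁻¹ • (sigmaZ * X * sigmaZ) := by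
  have htr : ∀ X, (qchanL K1 K2 X).trace = X.trace := by
    rw [qchanL_eq_krausMap]
    exact trace_krausMap (by simpa [Fin.sum_univ_two] using hTP)
  have hker : LinearMap.ker (qchanL K1 K2) ≠ ⊥ := (LinearMap.bot_lt_ker_of_det_eq_zero hdet).ne'
  obtain ⟨A, B, hAB⟩ : ∃ A B, ∀ X, qchanL K1 K2 X = measurePrepare A B X := by
    rw [qchanL_eq_krausMap] at htr hker ⊢
    obtain ⟨a, b, hab⟩ := exists_krausMap_vecMulVec_eq htr hker
    exact ⟨_, _, fun X => by rw [hab, krausMap_vecMulVec_apply]⟩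
  simp only [LinearMap.mem_range, hAB, half_smul_add_half_smul_sigmaZ_conj] at htr hone ⊢
  obtain ⟨V, hV, W, hW, hVW⟩ := exists_unitary_conj_measurePrepare_eq_diagonal htr hone
  exact ⟨V, W, hV, hW, hVW⟩

/-- A qubit quantum channel of Kraus rank at most 2 with vanishing
determinant (as a linear endomorphism of `M_2(ℂ)`) mapping some state to the maximally
mixed state is, up to local unitaries, the completely dephasing channel
`X ↦ ½ X + ½ σ_z X σ_z`. -/
theorem stmt_12 (K1 K2 : Matrix (Fin 2) (Fin 2) ℂ)
    (hTP : K1ᴴ * K1 + K2ᴴ * K2 = 1)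
    (hdet : LinearMap.det (qchanL K1 K2) = 0)
    (hρ : ∃ ρ : Matrix (Fin 2) (Fin 2) ℂ, ρ.PosSemidef ∧ ρ.trace = 1 ∧
      qchanL K1 K2 ρ = ((2 : ℂ))⁻¹ • 1) :
    ∃ V W : Matrix (Fin 2) (Fin 2) ℂ,
      V ∈ Matrix.unitaryGroup (Fin 2) ℂ ∧ W ∈ Matrix.unitaryGroup (Fin 2) ℂ ∧
      ∀ X : Matrix (Fin 2) (Fin 2) ℂ,
        W * (qchanL K1 K2 (V * X * Vᴴ)) * Wᴴ =
          ((2 : ℂ))⁻¹ • X + ((2 : ℂ))⁻¹ • (sigmaZ * X * sigmaZ) := by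
  obtain ⟨ρ, -, -, hρ⟩ := hρ
  exact stmt_12_general K1 K2 hTP hdet
    ⟨(2 : ℂ) • ρ, by rw [map_smul, hρ, smul_inv_smul₀ two_ne_zero]⟩

end
end

section
/- Let U be a unitary on (ℂ²)^{⊗N} and suppose there exist a vector |φ⟩ ∈ (ℂ²)^{⊗N} and isometries V_k : ℂ² → ℂ² ⊗ ℂ² (V_k† V_k = 𝟙_2) for k = 1, …, N such that (V_1 ⊗ ⋯ ⊗ V_N)|φ⟩ = |U⟩, the site-wise vectorization of U. Then U is local-unitary equivalent to a phase unitary: there exist single-qubit unitaries v_1, …, v_N, w_1, …, w_N ∈ U(2) and real phases θ_{i_1 … i_N} such that (v_1 ⊗ ⋯ ⊗ v_N) U (w_1 ⊗ ⋯ ⊗ w_N) = Σ_{i_1, …, i_N ∈ {0,1}} e^{i θ_{i_1 … i_N}} |i_1 … i_N⟩⟨i_1 … i_N|. -/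
open Matrix

noncomputable section

/-!
Cut the qubits into site `k` and the rest. Since the range of `V_k` is spanned by two vectors, the
hypothesis says that `U = B₀ ⊗ A₀ + B₁ ⊗ A₁` with `A₀`, `A₁` acting on site `k`. Over `ℂ` the
pencil `A₀ + t A₁` contains a singular matrix, so one may take `det A₀ = 0`, and unitaries on both
sides of site `k` bring `A₀` to a multiple of `|0⟩⟨0|`. Unitarity of `U` then compares the block
columns at `|1⟩` and `|0⟩`: either `A₁` is diagonal, or `B₀` is a multiple of `B₁` and `U` is a
product of an operator on site `k` and one on the rest. In both cases single-site unitaries make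
`U` block diagonal at site `k`. Local unitaries at the other sites preserve this, so all sites can
be treated at once, and the result is a diagonal unitary.
-/

open scoped Kronecker

section SplitAtSite

variable {ι n : Type*} [DecidableEq ι]

/-- Configurations on all sites, split into the configuration away from site `k` and the one at
site `k`. The distinguished site comes second so that operators controlled by it are literally
`Matrix.blockDiagonal`. -/
def splitAtSite (k : ι) (n : Type*) : (ι → n) ≃ ({l // l ≠ k} → n) × n :=
  (Equiv.funSplitAt k n).trans (Equiv.prodComm _ _)

lemma splitAtSite_apply (k : ι) (f : ι → n) :
    splitAtSite k n f = (fun l : {l // l ≠ k} => f l, f k) :=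
  rfl

@[simp]
lemma splitAtSite_symm_apply_self (k : ι) (p : ({l // l ≠ k} → n) × n) :
    (splitAtSite k n).symm p k = p.2 := by
  simp [splitAtSite, Equiv.funSplitAt, Equiv.piSplitAt]

@[simp]
lemma splitAtSite_symm_apply_coe {k : ι} (p : ({l // l ≠ k} → n) × n) (l : {l // l ≠ k}) :
    (splitAtSite k n).symm p l = p.1 l := by
  simp [splitAtSite, Equiv.funSplitAt, Equiv.piSplitAt, l.2]

end SplitAtSite

section PiKronecker

variable {ι l m n R : Type*} [Fintype ι]

/-- The Kronecker product `A₁ ⊗ ⋯ ⊗ A_N` of a finite family of matrices, whose rows and columns are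
indexed by functions on the index set of the family. -/
def piKronecker [CommMonoid R] (A : ι → Matrix m n R) : Matrix (ι → m) (ι → n) R :=
  of fun i j => ∏ k, A k (i k) (j k)

lemma piKronecker_one [CommSemiring R] [DecidableEq n] :
    piKronecker (1 : ι → Matrix n n R) = 1 := by
  ext i j
  simp [piKronecker, one_apply, Finset.prod_ite_zero, funext_iff]

lemma piKronecker_mul [CommSemiring R] [DecidableEq ι] [Fintype m]
    (A : ι → Matrix l m R) (B : ι → Matrix m n R) :
    piKronecker (fun k => A k * B k) = piKronecker A * piKronecker B := by
  ext i j
  simp [piKronecker, mul_apply, Finset.prod_univ_sum, Finset.prod_mul_distrib]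

lemma conjTranspose_piKronecker [CommSemiring R] [StarRing R] (A : ι → Matrix m n R) :
    (piKronecker A)ᴴ = piKronecker fun k => (A k)ᴴ := by
  ext i j
  simp [piKronecker]

lemma piKronecker_mem_unitaryGroup [CommRing R] [StarRing R] [DecidableEq ι] [Fintype n]
    [DecidableEq n] {A : ι → Matrix n n R} (hA : ∀ k, A k ∈ unitaryGroup n R) :
    piKronecker A ∈ unitaryGroup (ι → n) R := by
  rw [mem_unitaryGroup_iff, star_eq_conjTranspose, conjTranspose_piKronecker, ← piKronecker_mul,
    ← piKronecker_one]
  exact congrArg piKronecker (funext fun k => mem_unitaryGroup_iff.mp (hA k))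

lemma reindex_splitAtSite_piKronecker [CommMonoid R] [DecidableEq ι] (k : ι)
    (A : ι → Matrix m n R) :
    reindex (splitAtSite k m) (splitAtSite k n) (piKronecker A) =
      (piKronecker fun l : {l // l ≠ k} => A l) ⊗ₖ A k := by
  ext ⟨i, a⟩ ⟨j, b⟩
  simp only [reindex_apply, submatrix_apply, piKronecker, of_apply, kroneckerMap_apply]
  rw [Fintype.prod_eq_mul_prod_subtype_ne _ k, mul_comm]
  simp only [splitAtSite_symm_apply_self, splitAtSite_symm_apply_coe]

end PiKronecker

section Unitary

variable {ι n 𝕜 : Type*} [Fintype n] [DecidableEq n] [Fintype ι] [DecidableEq ι]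

lemma reindex_mem_unitaryGroup {R : Type*} [CommRing R] [StarRing R] (e : ι ≃ n)
    {U : Matrix ι ι R} (hU : U ∈ unitaryGroup ι R) : reindex e e U ∈ unitaryGroup n R := by
  rw [mem_unitaryGroup_iff, star_eq_conjTranspose, conjTranspose_reindex, reindex_apply,
    reindex_apply, submatrix_mul_equiv, ← star_eq_conjTranspose, mem_unitaryGroup_iff.mp hU,
    submatrix_one_equiv]

variable [RCLike 𝕜]

lemma exists_mem_unitaryGroup_col_eq {x : EuclideanSpace 𝕜 n} (hx : ‖x‖ = 1) (j : n) :
    ∃ w ∈ unitaryGroup n 𝕜, w.col j = x := by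
  have hortho : Orthonormal 𝕜 (({j} : Set n).domRestrict fun _ => x) := by
    rw [orthonormal_iff_ite]
    rintro ⟨_, rfl⟩ ⟨_, rfl⟩
    simp [Set.domRestrict, inner_self_eq_norm_sq_to_K, hx]
  obtain ⟨b, hb⟩ := hortho.exists_orthonormalBasis_extension_of_card_eq (by simp)
  refine ⟨(EuclideanSpace.basisFun n 𝕜).toBasis.toMatrix b,
    (EuclideanSpace.basisFun n 𝕜).toMatrix_orthonormalBasis_mem_unitary b, ?_⟩
  ext i
  simp [Module.Basis.toMatrix_apply, hb j rfl]

lemma exists_mem_unitaryGroup_mul_col_eq_zero {A : Matrix n n 𝕜} (hA : A.det = 0) (j : n) :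
    ∃ w ∈ unitaryGroup n 𝕜, (A * w).col j = 0 := by
  obtain ⟨y, hy, hAy⟩ := exists_mulVec_eq_zero_iff.mpr hA
  have hy' : WithLp.toLp 2 y ≠ 0 := by simpa using hy
  obtain ⟨w, hw, hwj⟩ := exists_mem_unitaryGroup_col_eq (norm_smul_inv_norm (𝕜 := 𝕜) hy') j
  refine ⟨w, hw, ?_⟩
  have hcol : (A * w).col j = A *ᵥ w.col j := rfl
  rw [hcol, hwj, WithLp.ofLp_smul, mulVec_smul, hAy, smul_zero]

lemma exists_mem_unitaryGroup_row_col_eq_zero {A : Matrix n n 𝕜} (hA : A.det = 0) (j : n) :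
    ∃ v ∈ unitaryGroup n 𝕜, ∃ w ∈ unitaryGroup n 𝕜,
      (v * A * w).row j = 0 ∧ (v * A * w).col j = 0 := by
  obtain ⟨w, hw, hcol⟩ := exists_mem_unitaryGroup_mul_col_eq_zero hA j
  obtain ⟨v, hv, hrow⟩ := exists_mem_unitaryGroup_mul_col_eq_zero (A := Aᴴ) (by simp [hA]) j
  have hvA : (star v * A).row j = 0 := by
    have hstar : star v * A = (Aᴴ * v)ᴴ := by
      rw [conjTranspose_mul, conjTranspose_conjTranspose, star_eq_conjTranspose]
    ext i
    rw [row_apply, hstar, conjTranspose_apply, Pi.zero_apply, star_eq_zero]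
    exact congrFun hrow i
  refine ⟨star v, Unitary.star_mem hv, w, hw, ?_, ?_⟩
  · have : (star v * A * w).row j = (star v * A).row j ᵥ* w := rfl
    rw [this, hvA, zero_vecMul]
  · have : (star v * (A * w)).col j = star v *ᵥ (A * w).col j := rfl
    rw [Matrix.mul_assoc, this, hcol, mulVec_zero]

lemma exists_mem_unitaryGroup_eq_single {A : Matrix (Fin 2) (Fin 2) 𝕜} (hA : A.det = 0) :
    ∃ v ∈ unitaryGroup (Fin 2) 𝕜, ∃ w ∈ unitaryGroup (Fin 2) 𝕜, ∃ c,
      v * A * w = single 0 0 c := by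
  obtain ⟨v, hv, w, hw, hrow, hcol⟩ := exists_mem_unitaryGroup_row_col_eq_zero hA 1
  refine ⟨v, hv, w, hw, (v * A * w) 0 0, ?_⟩
  ext a b
  fin_cases a <;> fin_cases b
  · simp
  · simpa using congrFun hcol 0
  · simpa using congrFun hrow 0
  · simpa using congrFun hcol 1

lemma exists_eq_smul_of_kronecker_mem_unitaryGroup [Nonempty ι] [Nonempty n]
    {B : Matrix ι ι 𝕜} {A : Matrix n n 𝕜} (h : B ⊗ₖ A ∈ unitaryGroup (ι × n) 𝕜) :
    ∃ u ∈ unitaryGroup n 𝕜, ∃ c : 𝕜, A = c • u := by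
  obtain ⟨i⟩ := ‹Nonempty ι›
  set s : ℝ := √(∑ j, ‖B j i‖ ^ 2) with hs
  have hB : (Bᴴ * B) i i = (s : 𝕜) * s := by
    rw [← RCLike.ofReal_mul, hs, Real.mul_self_sqrt (by positivity)]
    simp [mul_apply, RCLike.conj_mul]
  have hgram : (Bᴴ * B) ⊗ₖ (Aᴴ * A) = 1 := by
    rwa [mem_unitaryGroup_iff', star_eq_conjTranspose, conjTranspose_kronecker,
      ← mul_kronecker_mul] at h
  have hA : ((s : 𝕜) * s) • (Aᴴ * A) = 1 := by
    ext a b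
    simpa [one_apply, hB] using congrFun₂ hgram (i, a) (i, b)
  have hs0 : (s : 𝕜) ≠ 0 := by
    intro h0
    simp [h0] at hA
  refine ⟨(s : 𝕜) • A, ?_, (s : 𝕜)⁻¹, by rw [inv_smul_smul₀ hs0]⟩
  rw [mem_unitaryGroup_iff', star_eq_conjTranspose, conjTranspose_smul, smul_mul_smul_comm]
  simpa using hA

lemma exists_eq_diagonal_exp_of_isDiag {D : Matrix n n ℂ} (hD : D.IsDiag)
    (hU : D ∈ unitaryGroup n ℂ) :
    ∃ θ : n → ℝ, D = diagonal fun i => Complex.exp (θ i * Complex.I) := by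
  have hnorm (i : n) : ‖D i i‖ = 1 := by
    have hii := congrFun₂ (mem_unitaryGroup_iff'.mp hU) i i
    rw [← hD.diagonal_diag, star_eq_conjTranspose, diagonal_conjTranspose, diagonal_mul_diagonal,
      diagonal_apply_eq, one_apply_eq] at hii
    exact CStarRing.norm_of_mem_unitary (Unitary.mem_iff_star_mul_self.mpr hii)
  choose θ hθ using fun i => (Complex.norm_eq_one_iff _).mp (hnorm i)
  exact ⟨θ, by simp only [hθ]; exact hD.diagonal_diag.symm⟩

end Unitary

section Pencil

variable {K l m n : Type*} [Field K] [IsAlgClosed K] [Fintype n] [DecidableEq n] [Nonempty n]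

lemma exists_det_add_smul_eq_zero (A : Matrix n n K) {B : Matrix n n K} (hB : B.det ≠ 0) :
    ∃ t : K, (A + t • B).det = 0 := by
  obtain ⟨t, ht⟩ := spectrum.nonempty_of_isAlgClosed_of_finiteDimensional K (-(B⁻¹ * A))
  have hfactor : A + t • B = B * (algebraMap K _ t - -(B⁻¹ * A)) := by
    rw [sub_neg_eq_add, Matrix.mul_add, mul_nonsing_inv_cancel_left _ _ hB.isUnit,
      ← Algebra.commutes, ← Algebra.smul_def, add_comm]
  rw [spectrum.mem_iff, isUnit_iff_isUnit_det, isUnit_iff_ne_zero, not_not] at ht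
  exact ⟨t, by rw [hfactor, det_mul, ht, mul_zero]⟩

lemma exists_kronecker_add_kronecker_eq_det_eq_zero (B₀ B₁ : Matrix l m K) (A₀ A₁ : Matrix n n K) :
    ∃ (B₀' B₁' : Matrix l m K) (A₀' A₁' : Matrix n n K),
      B₀ ⊗ₖ A₀ + B₁ ⊗ₖ A₁ = B₀' ⊗ₖ A₀' + B₁' ⊗ₖ A₁' ∧ A₀'.det = 0 := by
  by_cases hA₁ : A₁.det = 0
  · exact ⟨B₁, B₀, A₁, A₀, add_comm _ _, hA₁⟩
  · obtain ⟨t, ht⟩ := exists_det_add_smul_eq_zero A₀ hA₁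
    refine ⟨B₀, B₁ - t • B₀, A₀ + t • A₁, A₁, ?_, ht⟩
    ext ⟨i, a⟩ ⟨j, b⟩
    simp only [Matrix.add_apply, Matrix.sub_apply, Matrix.smul_apply, kroneckerMap_apply,
      smul_eq_mul]
    ring

end Pencil

section Controlled

variable {ι n : Type*} [Fintype ι] [DecidableEq ι] [Fintype n] [DecidableEq n]

section CommRing

variable {R : Type*} [CommRing R]

lemma kronecker_mul_mul_apply_eq_zero {W : Matrix (ι × n) (ι × n) R} {v w : Matrix n n R}
    {D : n → Matrix ι ι R} (hD : (1 ⊗ₖ v) * W * (1 ⊗ₖ w) = blockDiagonal D) (P Q : Matrix ι ι R)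
    (i j : ι) {a b : n} (hab : a ≠ b) : ((P ⊗ₖ v) * W * (Q ⊗ₖ w)) (i, a) (j, b) = 0 := by
  have hblock : (P ⊗ₖ v) * W * (Q ⊗ₖ w) = blockDiagonal fun c => P * D c * Q := by
    have hP : P ⊗ₖ v = (P ⊗ₖ 1) * (1 ⊗ₖ v) := by
      rw [← mul_kronecker_mul, Matrix.mul_one, Matrix.one_mul]
    have hQ : Q ⊗ₖ w = (1 ⊗ₖ w) * (Q ⊗ₖ 1) := by
      rw [← mul_kronecker_mul, Matrix.mul_one, Matrix.one_mul]
    calc (P ⊗ₖ v) * W * (Q ⊗ₖ w) = (P ⊗ₖ 1) * ((1 ⊗ₖ v) * W * (1 ⊗ₖ w)) * (Q ⊗ₖ 1) := by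
          rw [hP, hQ]
          simp only [Matrix.mul_assoc]
      _ = blockDiagonal fun c => P * D c * Q := by
          rw [hD, kronecker_one, kronecker_one, ← blockDiagonal_mul, ← blockDiagonal_mul]
  rw [hblock, blockDiagonal_apply_ne _ _ _ hab]

variable [StarRing R]

/-- An operator on a bipartite system which unitaries acting on the second factor alone turn into
an operation controlled by that factor: one that is block diagonal with respect to the
computational basis of the second factor. -/
def IsLocallyControlled (W : Matrix (ι × n) (ι × n) R) : Prop :=
  ∃ v ∈ unitaryGroup n R, ∃ w ∈ unitaryGroup n R, ∃ D : n → Matrix ι ι R,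
    (1 ⊗ₖ v) * W * (1 ⊗ₖ w) = blockDiagonal D

lemma IsLocallyControlled.of_kronecker_mul_mul {W : Matrix (ι × n) (ι × n) R} {v w : Matrix n n R}
    (hv : v ∈ unitaryGroup n R) (hw : w ∈ unitaryGroup n R)
    (h : IsLocallyControlled ((1 ⊗ₖ v) * W * (1 ⊗ₖ w))) : IsLocallyControlled W := by
  obtain ⟨v', hv', w', hw', D, hD⟩ := h
  refine ⟨v' * v, mul_mem hv' hv, w * w', mul_mem hw hw', D, ?_⟩
  have hleft : (1 : Matrix ι ι R) ⊗ₖ (v' * v) = (1 ⊗ₖ v') * (1 ⊗ₖ v) := by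
    rw [← mul_kronecker_mul, Matrix.one_mul]
  have hright : (1 : Matrix ι ι R) ⊗ₖ (w * w') = (1 ⊗ₖ w) * (1 ⊗ₖ w') := by
    rw [← mul_kronecker_mul, Matrix.one_mul]
  rw [← hD, hleft, hright]
  simp only [Matrix.mul_assoc]

lemma isLocallyControlled_of_isDiag (B₀ B₁ : Matrix ι ι R) {A₀ A₁ : Matrix n n R}
    (hA₀ : A₀.IsDiag) (hA₁ : A₁.IsDiag) : IsLocallyControlled (B₀ ⊗ₖ A₀ + B₁ ⊗ₖ A₁) := by
  refine ⟨1, one_mem _, 1, one_mem _,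
    (fun a => A₀ a a • B₀) + fun a => A₁ a a • B₁, ?_⟩
  rw [one_kronecker_one, Matrix.one_mul, Matrix.mul_one, ← hA₀.diagonal_diag, ← hA₁.diagonal_diag,
    kronecker_diagonal, kronecker_diagonal, ← blockDiagonal_add]
  simp

end CommRing

lemma isLocallyControlled_kronecker {𝕜 : Type*} [RCLike 𝕜] [Nonempty ι] [Nonempty n]
    {B : Matrix ι ι 𝕜} {A : Matrix n n 𝕜} (h : B ⊗ₖ A ∈ unitaryGroup (ι × n) 𝕜) :
    IsLocallyControlled (B ⊗ₖ A) := by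
  obtain ⟨u, hu, c, rfl⟩ := exists_eq_smul_of_kronecker_mem_unitaryGroup h
  refine ⟨star u, Unitary.star_mem hu, 1, one_mem _, fun _ => c • B, ?_⟩
  rw [one_kronecker_one, Matrix.mul_one, ← mul_kronecker_mul, Matrix.one_mul, Matrix.mul_smul,
    mem_unitaryGroup_iff'.mp hu, kronecker_smul, ← smul_kronecker, kronecker_one]

lemma isDiag_or_eq_smul_of_mem_unitaryGroup {K : Type*} [Field K] [StarRing K] [Nonempty ι]
    {B₀ B₁ : Matrix ι ι K} {A : Matrix (Fin 2) (Fin 2) K}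
    (h : B₀ ⊗ₖ single 0 0 1 + B₁ ⊗ₖ A ∈ unitaryGroup (ι × Fin 2) K) :
    A.IsDiag ∨ ∃ c : K, B₀ = c • B₁ := by
  have hgram := mem_unitaryGroup_iff'.mp h
  simp only [star_eq_conjTranspose, conjTranspose_add, conjTranspose_kronecker, Matrix.add_mul,
    Matrix.mul_add, ← mul_kronecker_mul] at hgram
  have hnormal : (Aᴴ * A) 1 1 • (B₁ᴴ * B₁) = 1 := by
    ext i j
    simpa [one_apply, mul_apply, mul_comm] using congrFun₂ hgram (i, 1) (j, 1)
  have hortho : star (A 0 1) • (B₁ᴴ * B₀) + (Aᴴ * A) 1 0 • (B₁ᴴ * B₁) = 0 := by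
    ext i j
    simpa [one_apply, mul_apply, mul_comm] using congrFun₂ hgram (i, 1) (j, 0)
  have hnorm : (Aᴴ * A) 1 1 ≠ 0 := by
    intro h0
    simp [h0] at hnormal
  have hB₁ : B₁ ≠ 0 := by
    rintro rfl
    simp at hnormal
  have hinv : ((Aᴴ * A) 1 1 • B₁) * B₁ᴴ = 1 := by
    rw [mul_eq_one_comm, Matrix.mul_smul, hnormal]
  have hcomb : star (A 0 1) • B₀ + (Aᴴ * A) 1 0 • B₁ = 0 := by
    have := congrArg (((Aᴴ * A) 1 1 • B₁) * ·) hortho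
    simpa only [Matrix.mul_add, Matrix.mul_smul, ← Matrix.mul_assoc, hinv, Matrix.one_mul,
      Matrix.mul_zero] using this
  by_cases hA : A 0 1 = 0
  · left
    have hA' : A 1 0 = 0 := by
      have h11 : A 1 1 ≠ 0 := fun h11 => hnorm (by simp [mul_apply, hA, h11])
      have hcols : (Aᴴ * A) 1 0 = 0 := by simpa [hA, hB₁] using hcomb
      simpa [mul_apply, hA, h11] using hcols
    intro a b hab
    fin_cases a <;> fin_cases b
    · exact absurd rfl hab
    · exact hA
    · exact hA'
    · exact absurd rfl hab
  · refine .inr ⟨-((star (A 0 1))⁻¹ * (Aᴴ * A) 1 0), ?_⟩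
    rw [neg_smul, mul_smul, ← smul_neg, ← eq_neg_of_add_eq_zero_left hcomb,
      inv_smul_smul₀ (star_ne_zero.mpr hA)]

theorem isLocallyControlled_of_mem_unitaryGroup [Nonempty ι] {B₀ B₁ : Matrix ι ι ℂ}
    {A₀ A₁ : Matrix (Fin 2) (Fin 2) ℂ}
    (h : B₀ ⊗ₖ A₀ + B₁ ⊗ₖ A₁ ∈ unitaryGroup (ι × Fin 2) ℂ) :
    IsLocallyControlled (B₀ ⊗ₖ A₀ + B₁ ⊗ₖ A₁) := by
  obtain ⟨B₀', B₁', A₀', A₁', hpencil, hdet⟩ :=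
    exists_kronecker_add_kronecker_eq_det_eq_zero B₀ B₁ A₀ A₁
  rw [hpencil] at h ⊢
  obtain ⟨v, hv, w, hw, c, hsingle⟩ := exists_mem_unitaryGroup_eq_single hdet
  have hnormalForm : (1 ⊗ₖ v) * (B₀' ⊗ₖ A₀' + B₁' ⊗ₖ A₁') * (1 ⊗ₖ w) =
      (c • B₀') ⊗ₖ single 0 0 1 + B₁' ⊗ₖ (v * A₁' * w) := by
    simp only [Matrix.mul_add, Matrix.add_mul, ← mul_kronecker_mul, Matrix.one_mul,
      hsingle, smul_kronecker, ← kronecker_smul, smul_single, smul_eq_mul, mul_one]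
  have hunitary : (c • B₀') ⊗ₖ single 0 0 1 + B₁' ⊗ₖ (v * A₁' * w) ∈
      unitaryGroup (ι × Fin 2) ℂ := by
    rw [← hnormalForm]
    exact mul_mem (mul_mem (kronecker_mem_unitary (one_mem _) hv) h)
      (kronecker_mem_unitary (one_mem _) hw)
  refine .of_kronecker_mul_mul hv hw ?_
  rw [hnormalForm]
  rcases isDiag_or_eq_smul_of_mem_unitaryGroup hunitary with hdiag | ⟨t, ht⟩
  · refine isLocallyControlled_of_isDiag _ _ ?_ hdiag
    exact diagonal_single (0 : Fin 2) (1 : ℂ) ▸ isDiag_diagonal _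
  · rw [ht, smul_kronecker, ← kronecker_smul, ← kronecker_add] at hunitary ⊢
    exact isLocallyControlled_kronecker hunitary

end Controlled

lemma piKronecker_mul_mul_apply_eq_zero {ι n R : Type*} [Fintype ι] [DecidableEq ι] [Fintype n]
    [DecidableEq n] [CommRing R]
    {U : Matrix (ι → n) (ι → n) R} {v w : ι → Matrix n n R} {k : ι}
    {D : n → Matrix ({l // l ≠ k} → n) ({l // l ≠ k} → n) R}
    (hD : (1 ⊗ₖ v k) * reindex (splitAtSite k n) (splitAtSite k n) U * (1 ⊗ₖ w k) =
      blockDiagonal D)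
    {i j : ι → n} (hij : i k ≠ j k) : (piKronecker v * U * piKronecker w) i j = 0 := by
  set e := splitAtSite k n
  calc (piKronecker v * U * piKronecker w) i j
      = (reindex e e (piKronecker v) * reindex e e U * reindex e e (piKronecker w))
          (e i) (e j) := by
        simp only [reindex_apply, submatrix_mul_equiv, submatrix_apply, Equiv.symm_apply_apply]
    _ = 0 := by
        rw [reindex_splitAtSite_piKronecker, reindex_splitAtSite_piKronecker]
        exact kronecker_mul_mul_apply_eq_zero hD _ _ _ _ hij

lemma exists_reindex_splitAtSite_eq_sum_kronecker
    {ι m n n' R : Type*} [Fintype ι] [DecidableEq ι] [Fintype m] [CommSemiring R]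
    {U : Matrix (ι → n) (ι → n') R} {φ : (ι → m) → R} {V : ι → Matrix (n × n') m R}
    (hvec : ∀ z : ι → n × n', (piKronecker V *ᵥ φ) z = U (fun k => (z k).1) fun k => (z k).2)
    (k : ι) :
    ∃ B : m → Matrix ({l // l ≠ k} → n) ({l // l ≠ k} → n') R,
      reindex (splitAtSite k n) (splitAtSite k n') U =
        ∑ x, B x ⊗ₖ of fun a b => V k (a, b) x := by
  let e := splitAtSite k m
  let V' := piKronecker fun l : {l // l ≠ k} => V l
  refine ⟨fun x => of fun i j => (V' *ᵥ fun y => φ (e.symm (y, x))) fun l => (i l, j l), ?_⟩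
  ext ⟨i, a⟩ ⟨j, b⟩
  let z : ι → n × n' := fun l => ((splitAtSite k n).symm (i, a) l, (splitAtSite k n').symm (j, b) l)
  have hz : splitAtSite k (n × n') z = (fun l => (i l, j l), (a, b)) := by
    simp [splitAtSite_apply, z]
  calc reindex (splitAtSite k n) (splitAtSite k n') U (i, a) (j, b)
      = (piKronecker V *ᵥ φ) z := (hvec z).symm
    _ = (reindex (splitAtSite k (n × n')) e (piKronecker V) *ᵥ (φ ∘ e.symm))
          (splitAtSite k (n × n') z) := by
        rw [reindex_apply, submatrix_mulVec_equiv]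
        simp [Function.comp_assoc]
    _ = (∑ x, _ ⊗ₖ of fun a b => V k (a, b) x) (i, a) (j, b) := by
        rw [reindex_splitAtSite_piKronecker, hz]
        simp [mulVec, dotProduct, Fintype.sum_prod_type_right, Matrix.sum_apply, Finset.sum_mul,
          V', mul_right_comm]

theorem stmt_13_general {ι : Type*} [Fintype ι] [DecidableEq ι]
    {U : Matrix (ι → Fin 2) (ι → Fin 2) ℂ} (hU : U ∈ unitaryGroup (ι → Fin 2) ℂ)
    {φ : (ι → Fin 2) → ℂ} {V : ι → Matrix (Fin 2 × Fin 2) (Fin 2) ℂ}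
    (hvec : ∀ z : ι → Fin 2 × Fin 2,
      (piKronecker V *ᵥ φ) z = U (fun k => (z k).1) fun k => (z k).2) :
    ∃ v w : ι → Matrix (Fin 2) (Fin 2) ℂ,
      (∀ k, v k ∈ unitaryGroup (Fin 2) ℂ) ∧ (∀ k, w k ∈ unitaryGroup (Fin 2) ℂ) ∧
      ∃ θ : (ι → Fin 2) → ℝ, piKronecker v * U * piKronecker w =
        diagonal fun i => Complex.exp (θ i * Complex.I) := by
  have hctrl (k : ι) :
      IsLocallyControlled (reindex (splitAtSite k (Fin 2)) (splitAtSite k (Fin 2)) U) := by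
    obtain ⟨B, hB⟩ := exists_reindex_splitAtSite_eq_sum_kronecker hvec k
    have hUk := reindex_mem_unitaryGroup (splitAtSite k (Fin 2)) hU
    rw [hB, Fin.sum_univ_two] at hUk ⊢
    exact isLocallyControlled_of_mem_unitaryGroup hUk
  choose v hv w hw D hD using hctrl
  have hdiag : (piKronecker v * U * piKronecker w).IsDiag := fun i j hij =>
    have ⟨k, hk⟩ := Function.ne_iff.mp hij
    piKronecker_mul_mul_apply_eq_zero (hD k) hk
  have hunitary : piKronecker v * U * piKronecker w ∈ unitaryGroup (ι → Fin 2) ℂ :=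
    mul_mem (mul_mem (piKronecker_mem_unitaryGroup hv) hU) (piKronecker_mem_unitaryGroup hw)
  exact ⟨v, w, hv, hw, exists_eq_diagonal_exp_of_isDiag hdiag hunitary⟩

/-- If the site-wise vectorization `|U⟩` of an `N`-qubit unitary `U`
can be written as `(V_1 ⊗ ⋯ ⊗ V_N)|φ⟩` for isometries `V_k : ℂ² → ℂ² ⊗ ℂ²` (i.e. `U`
admits an LME state `φ` of local dimension 2), then `U` is local-unitary equivalent to a
unitary diagonal in the computational product basis. -/
theorem stmt_13 (N : ℕ) (hN : 1 ≤ N)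
    (U : Matrix (Fin N → Fin 2) (Fin N → Fin 2) ℂ)
    (hU : U ∈ Matrix.unitaryGroup (Fin N → Fin 2) ℂ)
    (φ : (Fin N → Fin 2) → ℂ)
    (V : Fin N → Matrix (Fin 2 × Fin 2) (Fin 2) ℂ)
    (hV : ∀ k, (V k)ᴴ * V k = 1)
    (hvec : ∀ z : Fin N → Fin 2 × Fin 2,
      (∑ x, (∏ k, V k (z k) (x k)) * φ x) = U (fun k => (z k).1) (fun k => (z k).2)) :
    ∃ v w : Fin N → Matrix (Fin 2) (Fin 2) ℂ,
      (∀ k, v k ∈ Matrix.unitaryGroup (Fin 2) ℂ) ∧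
      (∀ k, w k ∈ Matrix.unitaryGroup (Fin 2) ℂ) ∧
      ∃ θ : (Fin N → Fin 2) → ℝ,
        (Matrix.of fun i j => ∏ k, v k (i k) (j k)) * U *
            (Matrix.of fun i j => ∏ k, w k (i k) (j k)) =
          Matrix.diagonal (fun i => Complex.exp (θ i * Complex.I)) :=
  stmt_13_general hU hvec

end
end

section
/- Let N ≥ 2, let U_Z = 𝟙^{⊗N} − 2(|1⟩⟨1|)^{⊗N} on (ℂ²)^{⊗N}, and let X = σ_x be the Pauli-X matrix. Then the Heisenberg-evolved single-site operator U_Z† (X ⊗ 𝟙^{⊗(N−1)}) U_Z does not commute with the single-site operator 𝟙^{⊗(N−1)} ⊗ X on the opposite end of the chain. (Hence U_Z, although translation invariant and of constant operator Schmidt rank, violates the light-cone property of quantum cellular automata at arbitrary distance.) -/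
/-!
In the computational basis `U_Z` is a diagonal matrix `D` of signs and the Pauli matrix `X_p` is
the permutation matrix of the bit flip at `p`. Moving `D` past `X_p` turns `U_Z† X_p U_Z` into
`F_p X_p`, where `F_p` is diagonal with entry `D(x) D(x + e_p)` at `x`. Bit flips commute, so
`F_p X_p` commutes with `X_q` exactly when this entry is unchanged by the flip at `q`. For `q ≠ p`
it does change: it is `-1` at `x = 1⋯1`, but `1` once bit `q` of `x` has been flipped.
-/

open Matrix

noncomputable section

/-- The multi-control `Z`-gate `U_Z = 𝟙^{⊗N} − 2(|1⟩⟨1|)^{⊗N}` on `N` qubits. -/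
def UZ (N : ℕ) : Matrix (Fin N → Fin 2) (Fin N → Fin 2) ℂ :=
  1 - (2 : ℂ) • Matrix.of (fun i j : Fin N → Fin 2 =>
    if (∀ k, i k = 1) ∧ (∀ k, j k = 1) then 1 else 0)

/-- The Pauli matrix `σ_x` acting on qubit `p` of an `N`-qubit chain, tensored with the
identity on all other qubits. -/
def sigmaXat (N : ℕ) (p : Fin N) : Matrix (Fin N → Fin 2) (Fin N → Fin 2) ℂ :=
  Matrix.of fun x y =>
    if ∀ k, k ≠ p → x k = y k then (if x p = y p then 0 else 1) else 0

section PermMatrix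

variable {n R : Type*} [Fintype n] [DecidableEq n]

theorem permMatrix_mul_diagonal [NonAssocSemiring R] (σ : Equiv.Perm n) (d : n → R) :
    σ.permMatrix R * diagonal d = diagonal (d ∘ σ) * σ.permMatrix R := by
  ext i j
  by_cases h : σ i = j <;> simp [mul_diagonal, diagonal_mul, Equiv.toPEquiv_apply, h]

variable [Semiring R]

theorem isUnit_permMatrix (σ : Equiv.Perm n) : IsUnit (σ.permMatrix R) := by
  simpa only [permMatrixHom_apply, inv_inv] using
    (Group.isUnit σ⁻¹).map (permMatrixHom (n := n) (R := R))

theorem commute_diagonal_mul_permMatrix_iff {σ τ : Equiv.Perm n} (h : Commute σ τ) {f : n → R} :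
    Commute (diagonal f * σ.permMatrix R) (τ.permMatrix R) ↔ f ∘ τ = f := by
  have hright : diagonal f * σ.permMatrix R * τ.permMatrix R =
      diagonal f * (τ * σ).permMatrix R := by
    rw [permMatrix_mul, Matrix.mul_assoc]
  have hleft : τ.permMatrix R * (diagonal f * σ.permMatrix R) =
      diagonal (f ∘ τ) * (τ * σ).permMatrix R := by
    rw [← Matrix.mul_assoc, permMatrix_mul_diagonal, Matrix.mul_assoc, ← permMatrix_mul, h.eq]
  rw [commute_iff_eq, hright, hleft, (isUnit_permMatrix _).mul_left_inj,
    diagonal_injective.eq_iff, eq_comm]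

end PermMatrix

section BitFlip

variable {ι : Type*} [DecidableEq ι]

/-- The bit flip at site `p`, as a permutation of the computational basis. It is encoded as
translation by the `p`-th unit vector, `Fin 2` carrying addition modulo `2`. -/
def bitFlip (p : ι) : Equiv.Perm (ι → Fin 2) :=
  Equiv.addRight (Pi.single p 1)

theorem bitFlip_apply (p : ι) (x : ι → Fin 2) : bitFlip p x = x + Pi.single p 1 :=
  rfl

theorem commute_bitFlip (p q : ι) : Commute (bitFlip p) (bitFlip q) :=
  Equiv.ext fun x => add_right_comm x (Pi.single q 1) (Pi.single p 1)

theorem bitFlip_eq_iff {p : ι} {x y : ι → Fin 2} :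
    bitFlip p x = y ↔ (∀ k, k ≠ p → x k = y k) ∧ x p ≠ y p := by
  have add_one_eq_iff (a b : Fin 2) : a + 1 = b ↔ a ≠ b := by decide +revert
  rw [bitFlip_apply, funext_iff, and_comm]
  refine ⟨fun h => ⟨?_, fun k hk => ?_⟩, fun ⟨hp, h⟩ k => ?_⟩
  · simpa [add_one_eq_iff] using h p
  · simpa [hk] using h k
  · rcases eq_or_ne k p with rfl | hk
    · simpa [add_one_eq_iff] using hp
    · simpa [hk] using h k hk

theorem bitFlip_apply_ne_self (p : ι) (x : ι → Fin 2) : bitFlip p x ≠ x :=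
  fun h => (bitFlip_eq_iff.1 h).2 rfl

theorem bitFlip_bitFlip_eq_self_iff {p q : ι} {x : ι → Fin 2} :
    bitFlip p (bitFlip q x) = x ↔ p = q := by
  have one_add_one : (1 : Fin 2) + 1 = 0 := by decide
  rw [bitFlip_apply, bitFlip_apply, add_assoc, add_eq_left]
  refine ⟨fun h => ?_, fun h => ?_⟩
  · by_contra hpq
    simpa [hpq] using congrFun h p
  · rw [h, ← Pi.single_add, one_add_one, Pi.single_zero]

end BitFlip

section Phase

variable {ι : Type*} [Fintype ι]

/-- The diagonal of the multi-control `Z`-gate in the computational basis: the sign `-1` on the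
all-ones bit string `1` and `1` elsewhere. -/
def czPhase (x : ι → Fin 2) : ℂ :=
  if x = 1 then -1 else 1

theorem czPhase_one : czPhase (1 : ι → Fin 2) = -1 :=
  if_pos rfl

theorem czPhase_of_ne_one {x : ι → Fin 2} (hx : x ≠ 1) : czPhase x = 1 :=
  if_neg hx

theorem star_czPhase : star (czPhase : (ι → Fin 2) → ℂ) = czPhase := by
  funext x
  by_cases hx : x = 1
  · simp [hx, czPhase_one]
  · simp [czPhase_of_ne_one hx]

variable [DecidableEq ι]

/-- The sign that a bit flip at `p`, applied to `x`, picks up when it is conjugated by the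
multi-control `Z`-gate. -/
def bitFlipPhase (p : ι) (x : ι → Fin 2) : ℂ :=
  czPhase x * czPhase (bitFlip p x)

theorem bitFlipPhase_comp_bitFlip_eq_iff {p q : ι} :
    bitFlipPhase p ∘ bitFlip q = bitFlipPhase p ↔ p = q := by
  refine ⟨fun h => ?_, fun h => ?_⟩
  · by_contra hpq
    have phase_one : bitFlipPhase p (1 : ι → Fin 2) = -1 := by
      rw [bitFlipPhase, czPhase_one, czPhase_of_ne_one (bitFlip_apply_ne_self p 1), mul_one]
    have phase_flip : bitFlipPhase p (bitFlip q 1) = 1 := by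
      rw [bitFlipPhase, czPhase_of_ne_one (bitFlip_apply_ne_self q 1),
        czPhase_of_ne_one (bitFlip_bitFlip_eq_self_iff.not.2 hpq), mul_one]
    have phase_eq : bitFlipPhase p (bitFlip q 1) = bitFlipPhase p 1 := congrFun h 1
    norm_num [phase_one, phase_flip] at phase_eq
  · subst h
    funext x
    rw [Function.comp_apply, bitFlipPhase, bitFlipPhase, bitFlip_bitFlip_eq_self_iff.2 rfl,
      mul_comm]

end Phase

section Qubits

variable {N : ℕ}

theorem UZ_eq_diagonal : UZ N = diagonal czPhase := by
  ext x y
  have all_ones_iff (z : Fin N → Fin 2) : (∀ k, z k = 1) ↔ z = 1 := funext_iff.symm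
  simp only [UZ, all_ones_iff, Matrix.sub_apply, Matrix.smul_apply, of_apply, smul_eq_mul]
  rcases eq_or_ne x y with rfl | hxy
  · by_cases hx : x = 1
    · norm_num [hx, czPhase_one]
    · simp [hx, czPhase_of_ne_one hx]
  · have not_both : ¬ (x = 1 ∧ y = 1) := fun h => hxy (h.1.trans h.2.symm)
    simp [hxy, not_both]

theorem sigmaXat_eq_permMatrix (p : Fin N) : sigmaXat N p = (bitFlip p).permMatrix ℂ := by
  ext x y
  simp only [sigmaXat, of_apply, PEquiv.toMatrix_apply, Equiv.toPEquiv_apply, Option.mem_some_iff,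
    bitFlip_eq_iff, ite_and, ite_not, ne_eq]

theorem UZ_conjTranspose_mul_sigmaXat_mul_UZ (p : Fin N) :
    (UZ N)ᴴ * sigmaXat N p * UZ N =
      diagonal (bitFlipPhase p) * (bitFlip p).permMatrix ℂ := by
  rw [UZ_eq_diagonal, sigmaXat_eq_permMatrix, diagonal_conjTranspose, star_czPhase,
    Matrix.mul_assoc, permMatrix_mul_diagonal, ← Matrix.mul_assoc, diagonal_mul_diagonal]
  rfl

theorem stmt_16_general {p q : Fin N} :
    Commute ((UZ N)ᴴ * sigmaXat N p * UZ N) (sigmaXat N q) ↔ p = q := by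
  rw [UZ_conjTranspose_mul_sigmaXat_mul_UZ, sigmaXat_eq_permMatrix,
    commute_diagonal_mul_permMatrix_iff (commute_bitFlip p q),
    bitFlipPhase_comp_bitFlip_eq_iff]

end Qubits

/-- For every `N ≥ 2`, the Heisenberg-evolved single-site operator
`U_Z† (X ⊗ 𝟙^{⊗(N−1)}) U_Z` does not commute with the single-site operator
`𝟙^{⊗(N−1)} ⊗ X` at the opposite end of the chain: `U_Z` violates the light-cone
property of quantum cellular automata at arbitrary distance. -/
theorem stmt_16 (N : ℕ) (hN : 2 ≤ N) :
    ((UZ N)ᴴ * sigmaXat N ⟨0, by omega⟩ * UZ N) * sigmaXat N ⟨N - 1, by omega⟩ ≠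
      sigmaXat N ⟨N - 1, by omega⟩ * ((UZ N)ᴴ * sigmaXat N ⟨0, by omega⟩ * UZ N) := by
  rw [ne_eq, ← commute_iff_eq, stmt_16_general, Fin.mk.injEq]
  omega

end
end

section
/- Let A_1, …, A_N be a tensor sequence that generates a matrix-product unitary and is in canonical form, with equal physical input and output dimension d at every site. If for some k < N the set of matrices { X̂ : X ∈ 𝒮^{(k)} } equals the full real vector space of traceless Hermitian D_k × D_k matrices, then D_k = 1. -/
open Matrix Kronecker

noncomputable section

/-- The partial matrix product `A_k^{i_k j_k} ⋯ A_1^{i_1 j_1}` of a tensor sequence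
(sites are 0-based: `A m` is the tensor of site `m+1`). -/
def mpoProd (d : ℕ) (D : ℕ → ℕ)
    (A : ∀ k : ℕ, Fin d → Fin d → Matrix (Fin (D (k + 1))) (Fin (D k)) ℂ) :
    ∀ N : ℕ, (Fin N → Fin d) → (Fin N → Fin d) → Matrix (Fin (D N)) (Fin (D 0)) ℂ
  | 0, _, _ => 1
  | (N + 1), i, j =>
      A N (i (Fin.last N)) (j (Fin.last N)) *
        mpoProd d D A N (fun t => i t.castSucc) (fun t => j t.castSucc)

/-- The matrix-product operator generated by the tensor sequence, acting on `(ℂ^d)^{⊗N}`;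
since `D 0 = D N = 1`, the `1 × 1` boundary matrix is identified with a scalar by
summing its entries. -/
def mpoOp (d : ℕ) (D : ℕ → ℕ)
    (A : ∀ k : ℕ, Fin d → Fin d → Matrix (Fin (D (k + 1))) (Fin (D k)) ℂ) (N : ℕ) :
    Matrix (Fin N → Fin d) (Fin N → Fin d) ℂ :=
  Matrix.of fun i j => ∑ m, ∑ n, mpoProd d D A N i j m n

/-- `∑ i j j', M j' j • conj(A^{i j'}) ⊗ conj?  -- the building block
`Σ_{i,j,j'} (M)_{j'j} · conj(A^{ij'}) ⊗ A^{ij}` (Kronecker product, entrywise conjugate). -/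
def Smat {d Dl Dr : ℕ} (A : Fin d → Fin d → Matrix (Fin Dl) (Fin Dr) ℂ)
    (M : Matrix (Fin d) (Fin d) ℂ) : Matrix (Fin Dl × Fin Dl) (Fin Dr × Fin Dr) ℂ :=
  ∑ i, ∑ j, ∑ j', M j' j • (((A i j').map (starRingEnd ℂ)) ⊗ₖ (A i j))

/-- The transfer matrix `E^{(k+1)} = (1/d) Σ_{i,j} conj(A_k^{ij}) ⊗ A_k^{ij}`. -/
def Esite (d : ℕ) (D : ℕ → ℕ)
    (A : ∀ k : ℕ, Fin d → Fin d → Matrix (Fin (D (k + 1))) (Fin (D k)) ℂ) (k : ℕ) :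
    Matrix (Fin (D (k + 1)) × Fin (D (k + 1))) (Fin (D k) × Fin (D k)) ℂ :=
  ((d : ℂ))⁻¹ • Smat (A k) 1

/-- `S_α^{(k+1)}`, where `α = 0` carries the extra `1/d` factor (there `σ 0 = 𝟙`). -/
def Ssite (d : ℕ) (D : ℕ → ℕ)
    (A : ∀ k : ℕ, Fin d → Fin d → Matrix (Fin (D (k + 1))) (Fin (D k)) ℂ)
    (σ : Fin (d * d) → Matrix (Fin d) (Fin d) ℂ) (k : ℕ) (α : Fin (d * d)) :
    Matrix (Fin (D (k + 1)) × Fin (D (k + 1))) (Fin (D k) × Fin (D k)) ℂ :=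
  (if (α : ℕ) = 0 then ((d : ℂ))⁻¹ else 1) • Smat (A k) (σ α)

/-- The product `S_{α_N}^{(N)} ⋯ S_{α_1}^{(1)}`. -/
def Schain (d : ℕ) (D : ℕ → ℕ)
    (A : ∀ k : ℕ, Fin d → Fin d → Matrix (Fin (D (k + 1))) (Fin (D k)) ℂ)
    (σ : Fin (d * d) → Matrix (Fin d) (Fin d) ℂ) :
    ∀ N : ℕ, (Fin N → Fin (d * d)) →
      Matrix (Fin (D N) × Fin (D N)) (Fin (D 0) × Fin (D 0)) ℂ
  | 0, _ => 1
  | (N + 1), α =>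
      Ssite d D A σ N (α (Fin.last N)) * Schain d D A σ N (fun t => α t.castSucc)

/-- `ρ^{(N)} = E^{(N)} ⋯ E^{(1)}`. -/
def rhoChain (d : ℕ) (D : ℕ → ℕ)
    (A : ∀ k : ℕ, Fin d → Fin d → Matrix (Fin (D (k + 1))) (Fin (D k)) ℂ) :
    ∀ N : ℕ, Matrix (Fin (D N) × Fin (D N)) (Fin (D 0) × Fin (D 0)) ℂ
  | 0 => 1
  | (N + 1) => Esite d D A N * rhoChain d D A N

/-- `𝒮^{(N)}`: the real span of all products `S_{α_N}^{(N)} ⋯ S_{α_1}^{(1)}` with some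
`α_t ≠ 0`. -/
def Sspan (d : ℕ) (D : ℕ → ℕ)
    (A : ∀ k : ℕ, Fin d → Fin d → Matrix (Fin (D (k + 1))) (Fin (D k)) ℂ)
    (σ : Fin (d * d) → Matrix (Fin d) (Fin d) ℂ) (N : ℕ) :
    Submodule ℝ (Matrix (Fin (D N) × Fin (D N)) (Fin (D 0) × Fin (D 0)) ℂ) :=
  Submodule.span ℝ
    {M | ∃ α : Fin N → Fin (d * d), (∃ t, (α t : ℕ) ≠ 0) ∧ M = Schain d D A σ N α}

/-- Identification of a vector in `ℂ^D ⊗ ℂ^D` (here: a `D² × 1` matrix, the column index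
ranging over the trivial type `Fin (D 0) × Fin (D 0)` with `D 0 = 1`) with a `D × D`
matrix. -/
def matHat {Dk D0 : ℕ} (M : Matrix (Fin Dk × Fin Dk) (Fin D0 × Fin D0) ℂ) :
    Matrix (Fin Dk) (Fin Dk) ℂ :=
  Matrix.of fun m n => ∑ q, M (m, n) q

/-!
Cut the chain after site `k`: `U = ∑ₐ Lₐ ⊗ Rₐ` with `a` ranging over the bond. If `C` is an operator
on the left part, the partial trace of `(C ⊗ 1) U†U = C ⊗ 1` reads
`∑ₐᵦ tr(C Lₐ†Lᵦ) Rₐ†Rᵦ = tr(C) 1`. The elements of `𝒮^{(k)}` are bond matrices `tr(C Lₐ†Lᵦ)` with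
`tr C = 0`, where `C` runs through real combinations of products of transposed `σ`'s. So if they
contain all traceless Hermitian matrices, then `M ↦ ∑ₐᵦ Mₐᵦ Rₐ†Rᵦ` is a multiple of the trace: the
square matrices `Rₐ` are pairwise orthogonal and share the same Gram matrix `Rₐ†Rₐ`. Taking
`tr C = 1` shows that this Gram matrix is invertible, which leaves room for only one bond index.
-/

section Trace

variable {m n R : Type*} [Fintype m] [CommSemiring R]

/-- The partial trace over the first tensor factor. -/
def traceLeft : Matrix (m × n) (m × n) R →ₗ[R] Matrix n n R where
  toFun Z := Matrix.of fun x y => ∑ j, Z (j, x) (j, y)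
  map_add' Y Z := by ext; simp [Finset.sum_add_distrib]
  map_smul' c Z := by ext; simp [Finset.mul_sum]

theorem traceLeft_kronecker (X : Matrix m m R) (Y : Matrix n n R) :
    traceLeft (X ⊗ₖ Y) = X.trace • Y := by
  ext x y
  simp [traceLeft, Matrix.trace, Finset.sum_mul]

theorem trace_submatrix_equiv [Fintype n] (e : n ≃ m) (X : Matrix m m R) :
    (X.submatrix e e).trace = X.trace :=
  e.sum_comp fun i => X i i

end Trace

section TracelessHermitian

variable {ι V : Type*} [Fintype ι] [AddCommGroup V] [Module ℂ V]

theorem map_eq_zero_of_forall_isHermitian_of_trace_eq_zero {T : Matrix ι ι ℂ →ₗ[ℂ] V}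
    (hT : ∀ M : Matrix ι ι ℂ, M.IsHermitian → M.trace = 0 → T M = 0)
    {M : Matrix ι ι ℂ} (hM : M.trace = 0) : T M = 0 := by
  have hMstar : (star M).trace = 0 := by
    rw [Matrix.star_eq_conjTranspose, Matrix.trace_conjTranspose, hM, star_zero]
  have hre : T (realPart M : Matrix ι ι ℂ) = 0 :=
    hT _ (realPart M).2 (by simp [realPart_apply_coe, Matrix.trace_add, hM, hMstar])
  have him : T (imaginaryPart M : Matrix ι ι ℂ) = 0 :=
    hT _ (imaginaryPart M).2 (by simp [imaginaryPart_apply_coe, Matrix.trace_sub, hM, hMstar])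
  rw [← realPart_add_I_smul_imaginaryPart M, map_add, map_smul, hre, him, smul_zero, add_zero]

theorem map_eq_trace_smul_map_single [DecidableEq ι] {T : Matrix ι ι ℂ →ₗ[ℂ] V}
    (hT : ∀ M : Matrix ι ι ℂ, M.IsHermitian → M.trace = 0 → T M = 0)
    (M : Matrix ι ι ℂ) (a : ι) : T M = M.trace • T (Matrix.single a a 1) := by
  have h : T (M - M.trace • Matrix.single a a 1) = 0 :=
    map_eq_zero_of_forall_isHermitian_of_trace_eq_zero hT (by simp [Matrix.trace_sub])
  rwa [map_sub, map_smul, sub_eq_zero] at h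

end TracelessHermitian

section OperatorFamily

variable {ι κ l m n p R : Type*} [Fintype l] [Fintype p] [CommSemiring R] [StarRing R]

theorem conjTranspose_sum_kronecker_mul_sum_kronecker [Fintype ι] [Fintype κ]
    (L : ι → Matrix l m R) (L' : κ → Matrix l m R) (S : ι → Matrix p n R)
    (S' : κ → Matrix p n R) :
    (∑ a, L a ⊗ₖ S a)ᴴ * ∑ b, L' b ⊗ₖ S' b =
      ∑ a, ∑ b, ((L a)ᴴ * L' b) ⊗ₖ ((S a)ᴴ * S' b) := by
  simp only [Matrix.conjTranspose_sum, Matrix.sum_mul, Matrix.mul_sum,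
    Matrix.conjTranspose_kronecker, Matrix.mul_kronecker_mul]
  exact Finset.sum_comm

/-- The map `M ↦ ∑ₐᵦ Mₐᵦ Sₐ† Sᵦ` contracting a bond matrix with the operators `S` on one side of the
bond. -/
def gramContraction [Fintype ι] (S : ι → Matrix p n R) : Matrix ι ι R →ₗ[R] Matrix n n R where
  toFun M := ∑ a, ∑ b, M a b • ((S a)ᴴ * S b)
  map_add' M M' := by simp [add_smul, Finset.sum_add_distrib]
  map_smul' c M := by simp [mul_smul, Finset.smul_sum]

theorem gramContraction_single [Fintype ι] [DecidableEq ι] (S : ι → Matrix p n R) (a b : ι) :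
    gramContraction S (Matrix.single a b 1) = (S a)ᴴ * S b := by
  simp [gramContraction, Matrix.single_apply, ite_and]

variable [Fintype m]

/-- The Gram matrix `(tr (C Lₐ† Lᵦ))ₐᵦ` of a family of operators `L`, weighted by `C`. It is kept
linear in `C`, which need not be positive. -/
def weightedGram (L : ι → Matrix l m R) : Matrix m m R →ₗ[R] Matrix ι ι R where
  toFun C := Matrix.of fun a b => (C * ((L a)ᴴ * L b)).trace
  map_add' C C' := by ext; simp [Matrix.add_mul]
  map_smul' c C := by ext; simp

theorem weightedGram_apply (L : ι → Matrix l m R) (C : Matrix m m R) (a b : ι) :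
    weightedGram L C a b = (C * ((L a)ᴴ * L b)).trace :=
  rfl

theorem gramContraction_weightedGram [Fintype ι] [DecidableEq m] [Finite n] [DecidableEq n]
    {L : ι → Matrix l m R} {S : ι → Matrix p n R}
    (h : (∑ a, L a ⊗ₖ S a)ᴴ * ∑ a, L a ⊗ₖ S a = 1) (C : Matrix m m R) :
    gramContraction S (weightedGram L C) = C.trace • (1 : Matrix n n R) := by
  cases nonempty_fintype n
  calc gramContraction S (weightedGram L C)
      _ = ∑ a, ∑ b, traceLeft ((C * ((L a)ᴴ * L b)) ⊗ₖ (1 * ((S a)ᴴ * S b))) := by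
        simp only [traceLeft_kronecker, Matrix.one_mul]
        rfl
      _ = traceLeft ((C ⊗ₖ 1) * ((∑ a, L a ⊗ₖ S a)ᴴ * ∑ a, L a ⊗ₖ S a)) := by
        simp only [conjTranspose_sum_kronecker_mul_sum_kronecker, Finset.mul_sum,
          ← Matrix.mul_kronecker_mul, map_sum]
      _ = C.trace • (1 : Matrix n n R) := by rw [h, Matrix.mul_one, traceLeft_kronecker]

variable [Fintype n]

theorem weightedGram_submatrix_equiv (L : ι → Matrix l m R) (C : Matrix m m R) (e : p ≃ l)
    (f : n ≃ m) :
    weightedGram (fun a => (L a).submatrix e f) (C.submatrix f f) = weightedGram L C := by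
  ext a b
  simp only [weightedGram_apply, Matrix.conjTranspose_submatrix, Matrix.submatrix_mul_equiv,
    trace_submatrix_equiv]

theorem weightedGram_sum_kronecker [Fintype κ] (B : ι → κ → Matrix p n R) (L : κ → Matrix l m R)
    (K : Matrix n n R) (C : Matrix m m R) (a b : ι) :
    weightedGram (fun a => ∑ c, B a c ⊗ₖ L c) (K ⊗ₖ C) a b =
      ∑ c, ∑ e, (K * ((B a c)ᴴ * B b e)).trace * weightedGram L C c e := by
  simp only [weightedGram_apply, conjTranspose_sum_kronecker_mul_sum_kronecker, Finset.mul_sum,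
    ← Matrix.mul_kronecker_mul, Matrix.trace_sum, Matrix.trace_kronecker]

end OperatorFamily

section OperatorSchmidt

variable {ι l m n R : Type*} [Fintype l] [Fintype m] [Fintype n] [DecidableEq n]

theorem subsingleton_of_conjTranspose_mul_eq_zero [Nonempty n] [CommRing R] [StarRing R]
    [Nontrivial R] {S : ι → Matrix n n R} {c : R} (hnorm : ∀ a, c • ((S a)ᴴ * S a) = 1)
    (horth : ∀ a b, a ≠ b → (S a)ᴴ * S b = 0) :
    Subsingleton ι := by
  refine ⟨fun a b => by_contra fun hab => one_ne_zero (α := Matrix n n R) ?_⟩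
  have hinv : S a * (c • (S a)ᴴ) = 1 := by
    rw [mul_eq_one_comm, Matrix.smul_mul, hnorm a]
  have hb : S b = 0 := by
    rw [← Matrix.one_mul (S b), ← hinv, Matrix.mul_assoc, Matrix.smul_mul, horth a b hab,
      smul_zero, Matrix.mul_zero]
  rw [← hnorm b, hb, Matrix.mul_zero, smul_zero]

theorem subsingleton_of_forall_exists_weightedGram_eq [Fintype ι] [DecidableEq m] [Nonempty m]
    [Nonempty n] {L : ι → Matrix l m ℂ} {S : ι → Matrix n n ℂ}
    (hU : (∑ a, L a ⊗ₖ S a)ᴴ * ∑ a, L a ⊗ₖ S a = 1)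
    (hL : ∀ M : Matrix ι ι ℂ, M.IsHermitian → M.trace = 0 →
      ∃ C : Matrix m m ℂ, C.trace = 0 ∧ weightedGram L C = M) :
    Subsingleton ι := by
  classical
  have hT (M : Matrix ι ι ℂ) (hM : M.IsHermitian) (htr : M.trace = 0) :
      gramContraction S M = 0 := by
    obtain ⟨C, hC, rfl⟩ := hL M hM htr
    rw [gramContraction_weightedGram hU, hC, zero_smul]
  obtain ⟨j⟩ : Nonempty m := inferInstance
  refine subsingleton_of_conjTranspose_mul_eq_zero (S := S)
    (c := (weightedGram L (Matrix.single j j 1)).trace) (fun a => ?_) fun a b hab => ?_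
  · rw [← gramContraction_single, ← map_eq_trace_smul_map_single hT,
      gramContraction_weightedGram hU, Matrix.trace_single_eq_same, one_smul]
  · rw [← gramContraction_single, map_eq_trace_smul_map_single hT _ a,
      Matrix.trace_single_eq_of_ne _ _ _ hab, zero_smul]

end OperatorSchmidt

section ProductOperator

variable {ι R : Type*} [CommSemiring R] {k : ℕ}

/-- The product operator `M₀ ⊗ ⋯ ⊗ M_{k-1}` on a chain of `k` sites. -/
def productOp (M : Fin k → Matrix ι ι R) : Matrix (Fin k → ι) (Fin k → ι) R :=
  Matrix.of fun i j => ∏ t, M t (i t) (j t)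

theorem productOp_succ (M : Fin (k + 1) → Matrix ι ι R) :
    (productOp M).submatrix (Fin.snocEquiv fun _ => ι) (Fin.snocEquiv fun _ => ι) =
      M (Fin.last k) ⊗ₖ productOp fun t => M t.castSucc := by
  ext ⟨i, i'⟩ ⟨j, j'⟩
  simp [productOp, Fin.snocEquiv, Fin.prod_univ_castSucc, mul_comm]

theorem trace_productOp [Fintype ι] (M : Fin k → Matrix ι ι R) :
    (productOp M).trace = ∏ t, (M t).trace :=
  (Fintype.prod_sum fun t x => M t x x).symm

end ProductOperator

section Site

variable {d Dl Dr : ℕ} (B : Fin d → Fin d → Matrix (Fin Dl) (Fin Dr) ℂ)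

/-- A site tensor read as a matrix of physical operators: `siteOp B m n` is the operator on
`ℂ^d` sitting at the bond indices `m`, `n`. -/
def siteOp (m : Fin Dl) (n : Fin Dr) : Matrix (Fin d) (Fin d) ℂ :=
  Matrix.of fun i j => B i j m n

theorem Smat_apply (M : Matrix (Fin d) (Fin d) ℂ) (m n : Fin Dl) (p q : Fin Dr) :
    Smat B M (m, n) (p, q) = (Mᵀ * ((siteOp B m p)ᴴ * siteOp B n q)).trace := by
  simp only [Smat, siteOp, Matrix.trace, Matrix.diag_apply, Matrix.mul_apply, Matrix.sum_apply,
    Matrix.smul_apply, Matrix.kroneckerMap_apply, Matrix.map_apply, Matrix.transpose_apply,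
    Matrix.conjTranspose_apply, Matrix.of_apply, Finset.mul_sum, smul_eq_mul, starRingEnd_apply]
  rw [Finset.sum_comm]
  exact Finset.sum_congr rfl fun j _ => Finset.sum_comm

theorem matHat_mul_apply {D₀ : ℕ} (S : Matrix (Fin Dl × Fin Dl) (Fin Dr × Fin Dr) ℂ)
    (X : Matrix (Fin Dr × Fin Dr) (Fin D₀ × Fin D₀) ℂ) (m n : Fin Dl) :
    matHat (S * X) m n = ∑ p, ∑ q, S (m, n) (p, q) * matHat X p q := by
  simp only [matHat, Matrix.of_apply, Matrix.mul_apply, Finset.mul_sum]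
  rw [Finset.sum_comm, Fintype.sum_prod_type]

end Site

section Chain

variable (d : ℕ) (D : ℕ → ℕ)
  (A : ∀ k : ℕ, Fin d → Fin d → Matrix (Fin (D (k + 1))) (Fin (D k)) ℂ)

/-- The operator generated by the first `k` sites, with the bond to the right of site `k` left
open at index `m`. -/
def leftOp (k : ℕ) (m : Fin (D k)) : Matrix (Fin k → Fin d) (Fin k → Fin d) ℂ :=
  Matrix.of fun i j => ∑ n, mpoProd d D A k i j m n

/-- The operator generated by the `r` sites after site `k`, with the bond to the right of site `k`
left open at index `n`. It is encoded through the tensor sequence shifted by `k`. -/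
def rightOp (k r : ℕ) (n : Fin (D k)) : Matrix (Fin r → Fin d) (Fin r → Fin d) ℂ :=
  Matrix.of fun i j => ∑ m, mpoProd d (fun t => D (k + t)) (fun t => A (k + t)) r i j m n

theorem mpoProd_add (k r : ℕ) (i j : Fin (k + r) → Fin d) :
    mpoProd d D A (k + r) i j =
      (mpoProd d (fun t => D (k + t)) (fun t => A (k + t)) r
          (fun t => i (Fin.natAdd k t)) fun t => j (Fin.natAdd k t) :
        Matrix (Fin (D (k + r))) (Fin (D k)) ℂ) *
        mpoProd d D A k (fun t => i (Fin.castAdd r t)) fun t => j (Fin.castAdd r t) := by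
  induction r with
  | zero => exact (Matrix.one_mul _).symm
  | succ r ih =>
    have h := ih (fun t => i t.castSucc) fun t => j t.castSucc
    exact (congrArg (A (k + r) (i (Fin.last (k + r))) (j (Fin.last (k + r))) * ·) h).trans
      (Matrix.mul_assoc _ _ _).symm

theorem mpoOp_add (k r : ℕ) :
    (mpoOp d D A (k + r)).submatrix (Fin.appendEquiv k r) (Fin.appendEquiv k r) =
      ∑ m, leftOp d D A k m ⊗ₖ rightOp d D A k r m := by
  ext ⟨i, i'⟩ ⟨j, j'⟩
  simp only [mpoOp, leftOp, rightOp, mpoProd_add, Matrix.submatrix_apply, Matrix.of_apply,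
    Matrix.sum_apply, Matrix.kroneckerMap_apply, Matrix.mul_apply, Fin.appendEquiv,
    Equiv.coe_fn_mk, Fin.append_left, Fin.append_right, Finset.sum_mul_sum]
  rw [Finset.sum_congr rfl fun _ _ => Finset.sum_comm, Finset.sum_comm]
  refine Finset.sum_congr rfl fun c _ => ?_
  rw [Finset.sum_comm]
  exact Finset.sum_congr rfl fun a _ => Finset.sum_congr rfl fun b _ => mul_comm _ _

theorem conjTranspose_mul_self_sum_leftOp_kronecker_rightOp {k r : ℕ}
    (hU : mpoOp d D A (k + r) ∈ Matrix.unitaryGroup (Fin (k + r) → Fin d) ℂ) :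
    (∑ m, leftOp d D A k m ⊗ₖ rightOp d D A k r m)ᴴ *
      ∑ m, leftOp d D A k m ⊗ₖ rightOp d D A k r m = 1 := by
  rw [← mpoOp_add, Matrix.conjTranspose_submatrix, Matrix.submatrix_mul_equiv,
    ← Matrix.star_eq_conjTranspose, Matrix.mem_unitaryGroup_iff'.1 hU, Matrix.submatrix_one_equiv]

theorem leftOp_succ (k : ℕ) (m : Fin (D (k + 1))) :
    (leftOp d D A (k + 1) m).submatrix (Fin.snocEquiv fun _ => Fin d)
        (Fin.snocEquiv fun _ => Fin d) =
      ∑ p, siteOp (A k) m p ⊗ₖ leftOp d D A k p := by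
  ext ⟨i, i'⟩ ⟨j, j'⟩
  simp only [leftOp, mpoProd, siteOp, Fin.snocEquiv, Matrix.submatrix_apply, Matrix.of_apply,
    Matrix.sum_apply, Matrix.kroneckerMap_apply, Matrix.mul_apply, Equiv.coe_fn_mk, Fin.snoc_last,
    Fin.snoc_castSucc, Finset.mul_sum]
  exact Finset.sum_comm

variable (σ : Fin (d * d) → Matrix (Fin d) (Fin d) ℂ)

theorem Ssite_apply (k : ℕ) (α : Fin (d * d)) (m n : Fin (D (k + 1))) (p q : Fin (D k)) :
    Ssite d D A σ k α (m, n) (p, q) =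
      (((if (α : ℕ) = 0 then (d : ℂ)⁻¹ else 1) • (σ α)ᵀ) *
        ((siteOp (A k) m p)ᴴ * siteOp (A k) n q)).trace := by
  simp only [Ssite, Matrix.smul_apply, Smat_apply, Matrix.smul_mul, Matrix.trace_smul]

theorem matHat_Schain (k : ℕ) (α : Fin k → Fin (d * d)) :
    matHat (Schain d D A σ k α) =
      weightedGram (leftOp d D A k)
        (productOp fun t => (if (α t : ℕ) = 0 then (d : ℂ)⁻¹ else 1) • (σ (α t))ᵀ) := by
  induction k with
  | zero =>
    ext m n
    simp [matHat, Schain, weightedGram_apply, leftOp, mpoProd, productOp, Matrix.trace,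
      Matrix.mul_apply, Matrix.one_apply]
  | succ k ih =>
    rw [← weightedGram_submatrix_equiv _ _ (Fin.snocEquiv fun _ => Fin d)
      (Fin.snocEquiv fun _ => Fin d), productOp_succ]
    ext m n
    simp only [leftOp_succ, weightedGram_sum_kronecker, Schain, matHat_mul_apply, Ssite_apply, ih]

variable {σ}

theorem exists_weightedGram_leftOp_eq_matHat
    (hσ : ∀ α : Fin (d * d), (α : ℕ) ≠ 0 → (σ α).trace = 0) {k : ℕ}
    {X : Matrix (Fin (D k) × Fin (D k)) (Fin (D 0) × Fin (D 0)) ℂ} (hX : X ∈ Sspan d D A σ k) :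
    ∃ C, C.trace = 0 ∧ weightedGram (leftOp d D A k) C = matHat X := by
  induction hX using Submodule.span_induction with
  | mem X h =>
    obtain ⟨α, ⟨t, ht⟩, rfl⟩ := h
    refine ⟨_, ?_, (matHat_Schain d D A σ k α).symm⟩
    rw [trace_productOp]
    exact Finset.prod_eq_zero (Finset.mem_univ t)
      (by rw [Matrix.trace_smul, Matrix.trace_transpose, hσ _ ht, smul_zero])
  | zero => exact ⟨0, Matrix.trace_zero _ _, by ext; simp [matHat]⟩
  | add X Y _ _ hX hY =>
    obtain ⟨C, hC, hCX⟩ := hX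
    obtain ⟨C', hC', hCY⟩ := hY
    refine ⟨C + C', by rw [Matrix.trace_add, hC, hC', add_zero], ?_⟩
    rw [map_add, hCX, hCY]
    ext
    simp [matHat, Finset.sum_add_distrib]
  | smul c X _ hX =>
    obtain ⟨C, hC, hCX⟩ := hX
    refine ⟨c • C, by rw [Matrix.trace_smul, hC, smul_zero], ?_⟩
    rw [LinearMap.map_smul_of_tower, hCX]
    ext
    simp [matHat, Finset.mul_sum]

end Chain

theorem stmt_18_general (d : ℕ) (hd : 0 < d) (D : ℕ → ℕ)
    (A : ∀ k : ℕ, Fin d → Fin d → Matrix (Fin (D (k + 1))) (Fin (D k)) ℂ)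
    (σ : Fin (d * d) → Matrix (Fin d) (Fin d) ℂ)
    (hσtr : ∀ α : Fin (d * d), (α : ℕ) ≠ 0 → (σ α).trace = 0) (k N : ℕ) (hk : k ≤ N)
    (hU : mpoOp d D A N ∈ Matrix.unitaryGroup (Fin N → Fin d) ℂ)
    (hS : {M : Matrix (Fin (D k)) (Fin (D k)) ℂ | M.IsHermitian ∧ M.trace = 0} ⊆
      {M | ∃ X ∈ Sspan d D A σ k, matHat X = M}) :
    D k = 1 := by
  obtain ⟨r, rfl⟩ := Nat.exists_eq_add_of_le hk
  have : NeZero d := ⟨hd.ne'⟩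
  have hiso := conjTranspose_mul_self_sum_leftOp_kronecker_rightOp d D A hU
  have hne : Nonempty (Fin (D k)) := by
    by_contra! hempty
    simp at hiso
  have hsub : Subsingleton (Fin (D k)) :=
    subsingleton_of_forall_exists_weightedGram_eq hiso fun M hM htr => by
      obtain ⟨X, hX, rfl⟩ := hS ⟨hM, htr⟩
      exact exists_weightedGram_leftOp_eq_matHat d D A hσtr hX
  exact le_antisymm (Fin.subsingleton_iff_le_one.1 hsub) (Fin.pos_iff_nonempty.2 hne)

/-- For a matrix-product unitary in canonical form (equal physical
input/output dimension `d` at every site): if for some `k < N` the set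
`{X̂ : X ∈ 𝒮^{(k)}}` is the full real vector space of traceless Hermitian `D_k × D_k`
matrices, then `D_k = 1` (the MPU factorizes there). -/
theorem stmt_18 (N d : ℕ) (hN : 1 ≤ N) (hd : 2 ≤ d) (D : ℕ → ℕ)
    (hD0 : D 0 = 1) (hDN : D N = 1) (hDpos : ∀ k, k ≤ N → 1 ≤ D k)
    (A : ∀ k : ℕ, Fin d → Fin d → Matrix (Fin (D (k + 1))) (Fin (D k)) ℂ)
    (σ : Fin (d * d) → Matrix (Fin d) (Fin d) ℂ)
    (hσ0 : ∀ α : Fin (d * d), (α : ℕ) = 0 → σ α = 1)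
    (hσherm : ∀ α : Fin (d * d), (α : ℕ) ≠ 0 → (σ α).IsHermitian)
    (hσtr : ∀ α : Fin (d * d), (α : ℕ) ≠ 0 → (σ α).trace = 0)
    (hσorth : ∀ α β : Fin (d * d), (α : ℕ) ≠ 0 → (β : ℕ) ≠ 0 →
      (σ α * σ β).trace = if α = β then 1 else 0)
    (hσbasis : Submodule.span ℂ (Set.range σ) = ⊤)
    (hU : mpoOp d D A N ∈ Matrix.unitaryGroup (Fin N → Fin d) ℂ)
    (hcan : ∀ k, k < N →
      ((d : ℂ))⁻¹ • ∑ i, ∑ j, (A k i j)ᴴ * (A k i j) = 1) :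
    ∀ k, k < N →
      ({M : Matrix (Fin (D k)) (Fin (D k)) ℂ | ∃ X ∈ Sspan d D A σ k, matHat X = M} =
        {M : Matrix (Fin (D k)) (Fin (D k)) ℂ | M.IsHermitian ∧ M.trace = 0}) →
      D k = 1 := by
  intro k hk hS
  exact stmt_18_general d (by lia) D A σ hσtr k N hk.le hU hS.ge

end
end

section
/- Let N ≥ 2 and let V ∈ U(2) be a 2×2 unitary. Define on (ℂ²)^{⊗N} the operator U = 𝟙^{⊗N} + Σ_{i,j ∈ {0,1}} (V_{ij} − δ_{ij}) (|i⟩⟨j|)^{⊗N}, which acts as V on the subspace spanned by |0⟩^{⊗N} and |1⟩^{⊗N} and trivially on its orthogonal complement. Then: (a) U is unitary; (b) U admits the following bond-dimension-5 uniform matrix-product representation: with diagonal 5×5 matrices A^{00} = diag(1,1,0,0,0), A^{11} = diag(1,0,1,0,0), A^{01} = diag(0,0,0,1,0), A^{10} = diag(0,0,0,0,1) and boundary b = diag(1, V_{00}−1, V_{11}−1, V_{01}, V_{10}), one has ⟨i_1 … i_N|U|j_1 … j_N⟩ = Tr(b A^{i_1 j_1} ⋯ A^{i_N j_N}) for all i_k,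 j_k ∈ {0,1}. -/
open Matrix

noncomputable section

/-- The operator `U = 𝟙^{⊗N} + Σ_{i,j} (V_{ij} − δ_{ij}) (|i⟩⟨j|)^{⊗N}`, acting as `V`
on `span{|0⟩^{⊗N}, |1⟩^{⊗N}}` and trivially on the orthogonal complement. -/
def Usub (N : ℕ) (V : Matrix (Fin 2) (Fin 2) ℂ) :
    Matrix (Fin N → Fin 2) (Fin N → Fin 2) ℂ :=
  Matrix.of fun x y =>
    (if x = y then 1 else 0) +
      ∑ i : Fin 2, ∑ j : Fin 2,
        (V i j - if i = j then 1 else 0) *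
          (if (∀ k, x k = i) ∧ (∀ k, y k = j) then 1 else 0)

/-- The diagonal bond-dimension-5 MPU tensor:
`A^{00} = diag(1,1,0,0,0)`, `A^{11} = diag(1,0,1,0,0)`, `A^{01} = diag(0,0,0,1,0)`,
`A^{10} = diag(0,0,0,0,1)`. -/
def Asub : Fin 2 → Fin 2 → Matrix (Fin 5) (Fin 5) ℂ := fun i j =>
  Matrix.diagonal
    (![![![1, 1, 0, 0, 0], ![0, 0, 0, 1, 0]],
       ![![0, 0, 0, 0, 1], ![1, 0, 1, 0, 0]]] i j)

/-- The boundary matrix `b = diag(1, V₀₀−1, V₁₁−1, V₀₁, V₁₀)`. -/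
def bsub (V : Matrix (Fin 2) (Fin 2) ℂ) : Matrix (Fin 5) (Fin 5) ℂ :=
  Matrix.diagonal ![1, V 0 0 - 1, V 1 1 - 1, V 0 1, V 1 0]

/-!
Let `W` be the isometry with columns `|i⟩^{⊗N}`, so that `U = 1 + W (V - 1) Wᴴ`. Because
`Wᴴ W = 1`, the map `A ↦ 1 + W (A - 1) Wᴴ` preserves products, adjoints and the identity, hence
sends unitaries to unitaries.

For the matrix-product form, all the matrices are diagonal, so each of the five bond states
contributes `b_a ∏ₖ (A^{iₖ jₖ})_{aa}` on its own. The `a`-th diagonal entry of `A^{ij}` is the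
indicator of `i = j` for `a = 0` and of a single pair `(i, j)` for the other four, so the products
are the indicators of the corresponding `N`-site configurations.
-/

section IsometryExtension

variable {m n R : Type*} [Fintype m] [Fintype n] [DecidableEq m] [DecidableEq n] [Ring R]
  [StarRing R]

/-- The extension of operators along an isometry `W`: for `Wᴴ * W = 1`, the operator
`1 + W * (A - 1) * Wᴴ` acts as `A` on the range of `W` and as the identity on its orthogonal
complement. It is bundled as a star monoid homomorphism so that it visibly preserves unitarity. -/
def isometryExtension (W : Matrix m n R) (hW : Wᴴ * W = 1) :
    Matrix n n R →⋆* Matrix m m R where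
  toFun A := 1 + W * (A - 1) * Wᴴ
  map_one' := by simp
  map_mul' A B := by
    have cancel_isometry : W * (A - 1) * Wᴴ * (W * (B - 1) * Wᴴ) =
        W * ((A - 1) * (B - 1)) * Wᴴ :=
      calc W * (A - 1) * Wᴴ * (W * (B - 1) * Wᴴ)
          = W * (A - 1) * (Wᴴ * W) * (B - 1) * Wᴴ := by simp only [Matrix.mul_assoc]
        _ = W * ((A - 1) * (B - 1)) * Wᴴ := by
          rw [hW, Matrix.mul_one, Matrix.mul_assoc W]
    have sub_one_mul : A * B - 1 = (A - 1) + (B - 1) + (A - 1) * (B - 1) := by noncomm_ring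
    rw [sub_one_mul, add_mul, mul_add, mul_add, cancel_isometry]
    simp only [Matrix.mul_add, Matrix.add_mul, one_mul, mul_one]
    abel
  map_star' A := by simp [star_eq_conjTranspose, Matrix.mul_assoc]

lemma isometryExtension_apply (W : Matrix m n R) (hW : Wᴴ * W = 1) (A : Matrix n n R) :
    isometryExtension W hW A = 1 + W * (A - 1) * Wᴴ :=
  rfl

end IsometryExtension

section CopyIsometry

variable (ι α R : Type*) [Fintype ι] [DecidableEq α]

/-- The matrix `∑ i, |i⟩^{⊗ι}⟨i|` copying a basis state to every site: its columns are the standard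
basis vectors at the constant configurations. -/
def copyIsometry [Zero R] [One R] : Matrix (ι → α) α R :=
  (1 : Matrix (ι → α) (ι → α) R).submatrix id (Function.const ι)

lemma copyIsometry_apply [Zero R] [One R] (x : ι → α) (i : α) :
    copyIsometry ι α R x i = if ∀ k, x k = i then 1 else 0 := by
  simp [copyIsometry, one_apply, funext_iff]

lemma conjTranspose_copyIsometry_mul_self [Nonempty ι] [DecidableEq ι] [Fintype α] [Semiring R]
    [StarRing R] : (copyIsometry ι α R)ᴴ * copyIsometry ι α R = 1 := by
  rw [copyIsometry, conjTranspose_submatrix, conjTranspose_one,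
    ← submatrix_mul _ _ _ id _ Function.bijective_id, Matrix.one_mul,
    submatrix_one _ Function.const_injective]

end CopyIsometry

lemma usub_eq_isometryExtension (N : ℕ) [NeZero N] (V : Matrix (Fin 2) (Fin 2) ℂ) :
    Usub N V = isometryExtension (copyIsometry (Fin N) (Fin 2) ℂ)
      (conjTranspose_copyIsometry_mul_self (Fin N) (Fin 2) ℂ) V := by
  ext x y
  rw [isometryExtension_apply, Matrix.mul_assoc]
  simp only [Usub, of_apply, Matrix.add_apply, mul_apply, Matrix.sub_apply, one_apply,
    conjTranspose_apply, copyIsometry_apply, Finset.mul_sum]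
  congr! 3 with i _ j
  split_ifs <;> simp_all

lemma usub_mem_unitaryGroup {N : ℕ} [NeZero N] {V : Matrix (Fin 2) (Fin 2) ℂ}
    (hV : V ∈ unitaryGroup (Fin 2) ℂ) : Usub N V ∈ unitaryGroup (Fin N → Fin 2) ℂ := by
  rw [usub_eq_isometryExtension]
  exact Unitary.map_mem _ hV

section DiagonalMatrixProduct

variable {n R κ : Type*} [Fintype n] [DecidableEq n] [Semiring R]

lemma list_prod_map_diagonal (l : List κ) (d : κ → n → R) :
    (l.map fun k => diagonal (d k)).prod = diagonal (l.map d).prod := by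
  simpa [Function.comp_def] using (map_list_prod (diagonalRingHom n R) (l.map d)).symm

lemma trace_diagonal_mul_list_prod_map_diagonal (b : n → R) (l : List κ) (d : κ → n → R) :
    (diagonal b * (l.map fun k => diagonal (d k)).prod).trace =
      ∑ a, b a * (l.map fun k => d k a).prod := by
  simp [list_prod_map_diagonal, Pi.list_prod_apply, Function.comp_def]

end DiagonalMatrixProduct

lemma asub_eq_diagonal_indicator (i j : Fin 2) :
    Asub i j = diagonal
      ![if i = j then 1 else 0,
        if i = 0 ∧ j = 0 then 1 else 0, if i = 1 ∧ j = 1 then 1 else 0,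
        if i = 0 ∧ j = 1 then 1 else 0, if i = 1 ∧ j = 0 then 1 else 0] := by
  fin_cases i <;> fin_cases j <;> simp [Asub]

lemma trace_bsub_mul_prod_asub {N : ℕ} (V : Matrix (Fin 2) (Fin 2) ℂ) (x y : Fin N → Fin 2) :
    (bsub V * ((List.finRange N).map fun k => Asub (x k) (y k)).prod).trace =
      (if ∀ k, x k = y k then 1 else 0) +
        (V 0 0 - 1) * (if ∀ k, x k = 0 ∧ y k = 0 then 1 else 0) +
        (V 1 1 - 1) * (if ∀ k, x k = 1 ∧ y k = 1 then 1 else 0) +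
        V 0 1 * (if ∀ k, x k = 0 ∧ y k = 1 then 1 else 0) +
        V 1 0 * (if ∀ k, x k = 1 ∧ y k = 0 then 1 else 0) := by
  simp only [asub_eq_diagonal_indicator, bsub]
  rw [trace_diagonal_mul_list_prod_map_diagonal]
  simp [← Fin.prod_univ_def, Fin.sum_univ_five, Fintype.prod_boole]

lemma usub_apply_eq_trace {N : ℕ} (V : Matrix (Fin 2) (Fin 2) ℂ) (x y : Fin N → Fin 2) :
    Usub N V x y =
      (bsub V * ((List.finRange N).map fun k => Asub (x k) (y k)).prod).trace := by
  rw [trace_bsub_mul_prod_asub]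
  simp only [Usub, of_apply, Fin.sum_univ_two, funext_iff, forall_and, Fin.isValue, ↓reduceIte,
    zero_ne_one, one_ne_zero, sub_zero]
  ring

/-- For `N ≥ 2` and any `V ∈ U(2)`: (a) `U` is unitary, and (b) `U`
admits the bond-dimension-5 uniform matrix-product representation
`⟨i|U|j⟩ = Tr(b A^{i_1 j_1} ⋯ A^{i_N j_N})`. -/
theorem stmt_19 (N : ℕ) (hN : 2 ≤ N) (V : Matrix (Fin 2) (Fin 2) ℂ)
    (hV : V ∈ Matrix.unitaryGroup (Fin 2) ℂ) :
    Usub N V ∈ Matrix.unitaryGroup (Fin N → Fin 2) ℂ ∧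
    ∀ x y : Fin N → Fin 2,
      Usub N V x y =
        (bsub V * ((List.finRange N).map (fun k => Asub (x k) (y k))).prod).trace := by
  have : NeZero N := ⟨by omega⟩
  exact ⟨usub_mem_unitaryGroup hV, usub_apply_eq_trace V⟩

end
end
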